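/- Under Assumptions A1 and A2, for every integer q ≥ 1, every function g ∈ L_{V^{1/(2q)}} and every n ≥ 1, the stationary chain satisfies the Rosenthal-type inequality E_π[|S_n|^{2q}] ≤ μ_q·(Var_π(S_n))^q + C_0^{2q}·‖ḡ‖_{V^{1/(2q)}}^{2q}·Σ_{u=1}^{q−1} B_0(u,q)·n^u / (ρ^{u/2}·(log(1/ρ))^{2q−u}), where C_0 = 2cπ(V). -/

import Mathlib

open MeasureTheory ProbabilityTheory Finset
open scoped ENNReal Classical

noncomputable section

/-- `n`-th iterate of a Markov kernel. -/
def kIter {Y : Type*} [MeasurableSpace Y] (Q : ProbabilityTheory.Kernel Y Y) :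
    ℕ → ProbabilityTheory.Kernel Y Y
  | 0 => ProbabilityTheory.Kernel.id
  | n + 1 => (kIter Q n).comp Q

/-- `U`-weighted total variation distance between two finite measures:
`∫ U d|μ - ν|`, via the Jordan decomposition of `μ - ν`. -/
def wTV {Y : Type*} [MeasurableSpace Y] (U : Y → ℝ) (μ ν : Measure Y) : ℝ :=
  (∫ x, U x ∂(μ - ν)) + ∫ x, U x ∂(ν - μ)

/-- `U`-weighted sup norm `‖g‖_U = sup_x |g x| / U x`. -/
def vnorm {Y : Type*} (U : Y → ℝ) (g : Y → ℝ) : ℝ := ⨆ x, |g x| / U x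

/-- Membership in the class `L_U`: measurable with finite `U`-weighted sup norm. -/
structure MemL {Y : Type*} [MeasurableSpace Y] (U : Y → ℝ) (g : Y → ℝ) : Prop where
  meas : Measurable g
  bdd : BddAbove (Set.range fun x => |g x| / U x)

/-- `(Xs n)` is a Markov chain with initial distribution `ξ` and Markov kernel `Q`:
the law of `Xs 0` is `ξ` and, conditionally on the past up to time `n`, the
distribution of `Xs (n+1)` is `Q (Xs n)`. -/
structure IsMarkovChain {X : Type*} [MeasurableSpace X] {Ω : Type*} [MeasurableSpace Ω]
    (P : Measure Ω) (Xs : ℕ → Ω → X) (ξ : Measure X)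
    (Q : ProbabilityTheory.Kernel X X) : Prop where
  meas : ∀ n, Measurable (Xs n)
  init : P.map (Xs 0) = ξ
  markov : ∀ (n : ℕ) (f : X → ℝ), Measurable f → (∀ x, |f x| ≤ 1) →
    (P[fun ω => f (Xs (n + 1) ω) |
        ⨆ i ∈ Finset.range (n + 1), MeasurableSpace.comap (Xs i) inferInstance])
      =ᵐ[P] fun ω => ∫ y, f y ∂(Q (Xs n ω))

/-- The combinatorial coefficient `B_γ(u,q)`. -/
def Bcoef (γ : ℝ) (u q : ℕ) : ℝ :=
  ((2 * q).factorial : ℝ) / (u.factorial : ℝ) *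
    ∑ k ∈ Finset.univ.filter
        (fun k : Fin u → Fin (2 * q + 1) =>
          (∀ i, 2 ≤ (k i : ℕ)) ∧ ∑ i, (k i : ℕ) = 2 * q),
      ∏ i, ((k i : ℕ).factorial : ℝ) ^ (γ + 2)

/-- The `2q`-th moment `(2q)!/(q! 2^q)` of the standard Gaussian. -/
def gaussMoment (q : ℕ) : ℝ := ((2 * q).factorial : ℝ) / ((q.factorial : ℝ) * 2 ^ q)

/-!
The joint moments of the variables `Y i = g (X i) - π(g)` form a formal power series `M` in
commuting variables, indexed by multisets of times, and the joint cumulants are its logarithm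
`κ`. The derivative of `κ` in direction `i` is the tilted mean of `Y i`, the quotient by `M` of
the series of moments weighted by `Y i`, and tilted means obey the recursion
`∂ᵢ ⟨Z⟩ = ⟨Yᵢ Z⟩ - ⟨Z⟩ ⟨Yᵢ⟩`. Along the chain, the tilted mean of `h (X t)` given times at most
`j` is that of `Q ^ (t - j) h - π(h)` at time `j`, which geometric ergodicity makes small. Peeling
off the largest time, an induction bounds the cumulants of order `k` by `(k - 1)!` times
`ρ ^ (depth / k)`, where `depth` is the spread of the times, and summing over times below `n`
bounds the `k`-th cumulant of `S_n` by a constant multiple of `n`. In the expansion of the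
`2 q`-th moment of `S_n` into cumulants, at most `q` blocks of size at least two occur; exactly
`q` blocks give the Gaussian term, and fewer blocks give the remainder.
-/

/-! ### Exponential power series indexed by multisets -/

/-- Exponential power series in variables indexed by `ι`: the function `f` encodes
`∑ₛ f s * xˢ / s!`, the sum being over all monomials `xˢ`. With this normalisation a partial
derivative only inserts an index into `s`. -/
def MultisetSeries (ι R : Type*) := Multiset ι → R

namespace MultisetSeries

variable {ι R : Type*} [CommRing R]

instance : AddCommGroup (MultisetSeries ι R) := inferInstanceAs (AddCommGroup (Multiset ι → R))

instance : Module R (MultisetSeries ι R) := inferInstanceAs (Module R (Multiset ι → R))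

instance : One (MultisetSeries ι R) := ⟨fun s => if s.card = 0 then 1 else 0⟩

instance : Mul (MultisetSeries ι R) :=
  ⟨fun f g s => (s.antidiagonal.map fun p => f p.1 * g p.2).sum⟩

@[simp] theorem zero_apply (s : Multiset ι) : (0 : MultisetSeries ι R) s = 0 := rfl

@[simp] theorem add_apply (f g : MultisetSeries ι R) (s : Multiset ι) : (f + g) s = f s + g s := rfl

@[simp] theorem sub_apply (f g : MultisetSeries ι R) (s : Multiset ι) : (f - g) s = f s - g s := rfl

@[simp] theorem smul_apply (r : R) (f : MultisetSeries ι R) (s : Multiset ι) :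
    (r • f) s = r * f s := rfl

theorem one_apply (s : Multiset ι) :
    (1 : MultisetSeries ι R) s = if s.card = 0 then 1 else 0 := rfl

theorem mul_apply (f g : MultisetSeries ι R) (s : Multiset ι) :
    (f * g) s = (s.antidiagonal.map fun p => f p.1 * g p.2).sum := rfl

theorem mul_apply_zero (f g : MultisetSeries ι R) : (f * g) 0 = f 0 * g 0 := by
  simp [mul_apply]

/-- Insertion of the index `a`; see `MultisetSeries.pderiv` for its meaning on series. -/
def shift (a : ι) : MultisetSeries ι R →ₗ[R] MultisetSeries ι R where
  toFun f s := f (a ::ₘ s)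
  map_add' _ _ := rfl
  map_smul' _ _ := rfl

theorem mul_apply_cons (f g : MultisetSeries ι R) (a : ι) (s : Multiset ι) :
    (f * g) (a ::ₘ s) = (f * shift a g) s + (shift a f * g) s := by
  simp only [mul_apply, Multiset.antidiagonal_cons, Multiset.map_add, Multiset.sum_add,
    Multiset.map_map]
  rfl

theorem shift_one (a : ι) : shift a (1 : MultisetSeries ι R) = 0 := by
  funext s
  exact if_neg (by simp)

protected theorem add_mul (f g h : MultisetSeries ι R) : (f + g) * h = f * h + g * h := by
  funext s
  simp [mul_apply, _root_.add_mul, Multiset.sum_map_add]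

protected theorem mul_comm (f g : MultisetSeries ι R) : f * g = g * f := by
  funext s
  induction s using Multiset.induction generalizing f g with
  | empty => simp only [mul_apply_zero, _root_.mul_comm]
  | cons a s ih => rw [mul_apply_cons, mul_apply_cons, ih f, ih _ g, add_comm]

protected theorem mul_add (f g h : MultisetSeries ι R) : f * (g + h) = f * g + f * h := by
  simp only [MultisetSeries.mul_comm f, MultisetSeries.add_mul]

protected theorem mul_assoc (f g h : MultisetSeries ι R) : f * g * h = f * (g * h) := by
  have shift_mul (a : ι) (f g : MultisetSeries ι R) :
      shift a (f * g) = f * shift a g + shift a f * g := funext (mul_apply_cons f g a)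
  funext s
  induction s using Multiset.induction generalizing f g h with
  | empty => simp only [mul_apply_zero, _root_.mul_assoc]
  | cons a s ih =>
    simp only [mul_apply_cons, shift_mul, MultisetSeries.add_mul, MultisetSeries.mul_add,
      add_apply, ih, add_assoc]

protected theorem zero_mul (f : MultisetSeries ι R) : 0 * f = 0 := by
  funext s
  simp [mul_apply]

protected theorem one_mul (f : MultisetSeries ι R) : 1 * f = f := by
  funext s
  induction s using Multiset.induction generalizing f with
  | empty => simp [mul_apply_zero, one_apply]
  | cons a s ih =>
    rw [mul_apply_cons, shift_one, ih, MultisetSeries.zero_mul, zero_apply, add_zero]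
    rfl

instance : CommRing (MultisetSeries ι R) where
  __ := (inferInstance : AddCommGroup (MultisetSeries ι R))
  left_distrib := MultisetSeries.mul_add
  right_distrib := MultisetSeries.add_mul
  zero_mul := MultisetSeries.zero_mul
  mul_zero f := (MultisetSeries.mul_comm f 0).trans (MultisetSeries.zero_mul f)
  mul_assoc := MultisetSeries.mul_assoc
  one_mul := MultisetSeries.one_mul
  mul_one f := (MultisetSeries.mul_comm f 1).trans (MultisetSeries.one_mul f)
  mul_comm := MultisetSeries.mul_comm

protected theorem smul_mul_assoc (r : R) (f g : MultisetSeries ι R) :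
    r • f * g = r • (f * g) := by
  funext s
  simp [mul_apply, Multiset.sum_map_mul_left, mul_assoc]

instance : Algebra R (MultisetSeries ι R) :=
  Algebra.ofModule MultisetSeries.smul_mul_assoc fun r f g => by
    rw [mul_comm, MultisetSeries.smul_mul_assoc, mul_comm]

/-- The partial derivative of a series with respect to the variable `a`. -/
def pderiv (a : ι) : Derivation R (MultisetSeries ι R) (MultisetSeries ι R) :=
  Derivation.mk' (shift a) fun f g => funext fun s => by
    rw [smul_eq_mul, smul_eq_mul, mul_comm g]
    exact mul_apply_cons f g a s

@[simp] theorem pderiv_apply (a : ι) (f : MultisetSeries ι R) (s : Multiset ι) :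
    pderiv a f s = f (a ::ₘ s) := rfl

/-- The constant term of a series. -/
def constantTerm : MultisetSeries ι R →ₐ[R] R :=
  AlgHom.ofLinearMap
    { toFun := fun f => f 0, map_add' := fun _ _ => rfl, map_smul' := fun _ _ => rfl }
    rfl mul_apply_zero

@[simp] theorem constantTerm_apply (f : MultisetSeries ι R) : constantTerm f = f 0 := rfl

theorem mul_apply_congr {f f' g g' : MultisetSeries ι R} {s : Multiset ι}
    (hf : ∀ t ≤ s, f t = f' t) (hg : ∀ t ≤ s, g t = g' t) : (f * g) s = (f' * g') s := by
  rw [mul_apply, mul_apply]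
  refine congrArg Multiset.sum (Multiset.map_congr rfl fun p hp => ?_)
  rw [← Multiset.mem_antidiagonal.1 hp] at hf hg
  rw [hf _ (Multiset.le_add_right ..), hg _ (Multiset.le_add_left ..)]

theorem pow_apply_eq_zero {f : MultisetSeries ι R} (hf : f 0 = 0) {n : ℕ} {s : Multiset ι}
    (hs : s.card < n) : (f ^ n) s = 0 := by
  induction n generalizing s with
  | zero => simp at hs
  | succ n ih =>
    rw [pow_succ', mul_apply, Multiset.sum_eq_zero]
    intro x hx
    obtain ⟨p, hp, rfl⟩ := Multiset.mem_map.1 hx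
    rw [Multiset.mem_antidiagonal] at hp
    rcases Multiset.empty_or_exists_mem p.1 with h | ⟨a, ha⟩
    · rw [h, hf, zero_mul]
    · have := Multiset.card_pos_iff_exists_mem.2 ⟨a, ha⟩
      rw [ih (by rw [← hp, Multiset.card_add] at hs; omega), mul_zero]

theorem isUnit_of_apply_zero_eq_one {f : MultisetSeries ι R} (hf : f 0 = 1) : IsUnit f := by
  have h0 : (1 - f) 0 = 0 := by simp [one_apply, hf]
  let g : MultisetSeries ι R := fun s =>
    (∑ j ∈ range (s.card + 1), (1 - f) ^ j : MultisetSeries ι R) s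
  have eval_sum (n : ℕ) (s : Multiset ι) :
      (∑ j ∈ range n, (1 - f) ^ j : MultisetSeries ι R) s = ∑ j ∈ range n, ((1 - f) ^ j) s :=
    Finset.sum_apply ..
  have g_eq {s t : Multiset ι} (h : t ≤ s) :
      g t = (∑ j ∈ range (s.card + 1), (1 - f) ^ j : MultisetSeries ι R) t := by
    simp only [g, eval_sum]
    refine sum_subset (range_subset_range.2 (by grind [Multiset.card_le_card h])) fun j _ hj => ?_
    exact pow_apply_eq_zero h0 (by simpa using hj)
  refine IsUnit.of_mul_eq_one g (funext fun s => ?_)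
  rw [mul_apply_congr (fun _ _ => rfl) fun t => g_eq]
  nth_rw 1 [← sub_sub_cancel 1 f]
  rw [mul_neg_geom_sum, sub_apply, pow_apply_eq_zero h0 (Nat.lt_succ_self _), sub_zero]

theorem exists_pderiv_eq {G : ι → MultisetSeries ι R}
    (hG : ∀ a b, pderiv b (G a) = pderiv a (G b)) :
    ∃ F : MultisetSeries ι R, F 0 = 0 ∧ ∀ a, pderiv a F = G a := by
  let cons (a : ι) (s : Multiset ι) (_ : R) : R := G a s
  have hcons (a b : ι) (s : Multiset ι) (r : R) :
      HEq (cons a (b ::ₘ s) (cons b s r)) (cons b (a ::ₘ s) (cons a s r)) :=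
    heq_of_eq (congrFun (hG a b) s)
  let F (s : Multiset ι) : R := s.recOn 0 cons hcons
  have F_cons (a : ι) (s : Multiset ι) : F (a ::ₘ s) = G a s := Multiset.recOn_cons a s
  exact ⟨F, rfl, fun a => funext (F_cons a)⟩

end MultisetSeries

/-! ### Coefficients of an exponential of a power series -/

section PowerSeriesExp

open PowerSeries

variable {K : Type*} [Field K] [CharZero K] {F G : K⟦X⟧}

theorem derivative_aeval_trunc_exp (G : K⟦X⟧) (n : ℕ) :
    d⁄dX K (Polynomial.aeval G (trunc (n + 1) (exp K))) =
      Polynomial.aeval G (trunc n (exp K)) * d⁄dX K G := by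
  rw [Derivation.map_aeval, ← trunc_derivative, derivative_exp, smul_eq_mul]

theorem coeff_aeval_trunc_exp (G : K⟦X⟧) (N n : ℕ) :
    coeff N (Polynomial.aeval G (trunc n (exp K))) =
      ∑ u ∈ range n, coeff N (G ^ u) / (u.factorial : K) := by
  rw [Polynomial.aeval_def, eval₂_trunc_eq_sum_range, map_sum]
  refine sum_congr rfl fun u _ => ?_
  rw [← Algebra.smul_def, coeff_smul, coeff_exp, smul_eq_mul]
  simp [div_eq_inv_mul]

theorem coeff_eq_coeff_aeval_trunc_exp (hF : constantCoeff F = 1) (hG : constantCoeff G = 0)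
    (h : d⁄dX K F = d⁄dX K G * F) {N n : ℕ} (hN : N < n) :
    coeff N F = coeff N (Polynomial.aeval G (trunc n (exp K))) := by
  induction N using Nat.strong_induction_on generalizing n with
  | _ N ih =>
  obtain ⟨n, rfl⟩ : ∃ n', n = n' + 1 := ⟨n - 1, by omega⟩
  cases N with
  | zero => simp [coeff_aeval_trunc_exp, sum_range_succ', hF, hG]
  | succ N =>
    refine mul_right_cancel₀ (Nat.cast_add_one_ne_zero N : (N : K) + 1 ≠ 0) ?_
    rw [← coeff_derivative, ← coeff_derivative, derivative_aeval_trunc_exp, h, mul_comm (d⁄dX K G),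
      coeff_mul, coeff_mul]
    refine sum_congr rfl fun p hp => ?_
    rw [HasAntidiagonal.mem_antidiagonal] at hp
    rw [ih p.1 (by omega) (n := n) (by omega)]

theorem coeff_eq_sum_coeff_pow (hF : constantCoeff F = 1) (hG : constantCoeff G = 0)
    (h : d⁄dX K F = d⁄dX K G * F) (N : ℕ) :
    coeff N F = ∑ u ∈ range (N + 1), coeff N (G ^ u) / (u.factorial : K) := by
  rw [coeff_eq_coeff_aeval_trunc_exp hF hG h (Nat.lt_succ_self N), coeff_aeval_trunc_exp]

end PowerSeriesExp

/-- The sequences `(k₁, …, kᵤ)` of integers `kᵢ ≥ 2` with sum `L`, which index the sum in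
`Bcoef`. -/
def blockSizes (u L : ℕ) : Finset (Fin u → Fin (L + 1)) :=
  univ.filter fun k => (∀ i, 2 ≤ (k i : ℕ)) ∧ ∑ i, (k i : ℕ) = L

theorem mem_blockSizes {u L : ℕ} {k : Fin u → Fin (L + 1)} :
    k ∈ blockSizes u L ↔ (∀ i, 2 ≤ (k i : ℕ)) ∧ ∑ i, (k i : ℕ) = L := by
  simp [blockSizes]

theorem blockSizes_eq_empty {u L : ℕ} (h : L < 2 * u) : blockSizes u L = ∅ := by
  refine filter_eq_empty_iff.2 fun k _ ⟨hk, hsum⟩ => ?_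
  have := card_nsmul_le_sum univ (fun i => (k i : ℕ)) 2 fun i _ => hk i
  rw [card_univ, Fintype.card_fin, smul_eq_mul, hsum] at this
  omega

theorem blockSizes_two_mul {q : ℕ} (hq : 1 ≤ q) :
    blockSizes q (2 * q) = {fun _ => ⟨2, by omega⟩} := by
  ext k
  rw [mem_blockSizes, mem_singleton]
  constructor
  · rintro ⟨hk, hsum⟩
    have htwo : ∑ _i : Fin q, 2 = ∑ i, (k i : ℕ) := by simp [hsum, mul_comm]
    exact funext fun i =>
      Fin.ext ((sum_eq_sum_iff_of_le fun i _ => hk i).1 htwo i (mem_univ i)).symm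
  · rintro rfl
    simp [mul_comm]

theorem coeff_pow_eq_sum_blockSizes {R : Type*} [CommSemiring R] {G : PowerSeries R}
    (h0 : G.coeff 0 = 0) (h1 : G.coeff 1 = 0) (u L : ℕ) :
    (G ^ u).coeff L = ∑ k ∈ blockSizes u L, ∏ i, G.coeff (k i : ℕ) := by
  have hcoeff := PowerSeries.coeff_prod (fun _ : Fin u => G) L univ
  rw [prod_const, card_univ, Fintype.card_fin] at hcoeff
  rw [hcoeff]
  symm
  refine sum_bij_ne_zero (fun k _ _ => Finsupp.equivFunOnFinite.symm fun i => (k i : ℕ))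
    ?_ ?_ ?_ fun _ _ _ => rfl
  · intro k hk _
    simp [mem_finsuppAntidiag, (mem_blockSizes.1 hk).2]
  · intro k _ _ k' _ _ hkk'
    exact funext fun i => Fin.ext (DFunLike.congr_fun hkk' i)
  · intro f hf hne
    have hsum : ∑ i, f i = L := (mem_finsuppAntidiag.1 hf).1
    have two_le (i : Fin u) : 2 ≤ f i := by
      by_contra! hlt
      refine hne (prod_eq_zero (mem_univ i) ?_)
      rcases (by omega : f i = 0 ∨ f i = 1) with hi | hi <;> rw [hi] <;> assumption
    have lt_succ (i : Fin u) : f i < L + 1 :=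
      Nat.lt_succ_of_le (hsum ▸ single_le_sum (fun _ _ => Nat.zero_le _) (mem_univ i))
    exact ⟨fun i => ⟨f i, lt_succ i⟩, mem_blockSizes.2 ⟨two_le, hsum⟩, hne, by ext i; rfl⟩

theorem coeff_two_mul_le {F G : PowerSeries ℝ} (hF : F.constantCoeff = 1) (h0 : G.coeff 0 = 0)
    (h1 : G.coeff 1 = 0) (h : PowerSeries.derivative ℝ F = PowerSeries.derivative ℝ G * F)
    {q : ℕ} (hq : 1 ≤ q) :
    F.coeff (2 * q) ≤ G.coeff 2 ^ q / (q.factorial : ℝ) + ∑ u ∈ Icc 1 (q - 1),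
      (∑ k ∈ blockSizes u (2 * q), ∏ i, |G.coeff (k i : ℕ)|) / (u.factorial : ℝ) := by
  have coeff_pow := coeff_pow_eq_sum_blockSizes h0 h1 (L := 2 * q)
  have hG : G.constantCoeff = 0 := by rwa [← PowerSeries.coeff_zero_eq_constantCoeff_apply]
  have hsub : insert q (Icc 1 (q - 1)) ⊆ range (2 * q + 1) := by
    intro u
    simp only [mem_insert, mem_Icc, mem_range]
    omega
  rw [coeff_eq_sum_coeff_pow hF hG h, ← sum_subset hsub, sum_insert (by simp; omega)]
  · gcongr with u
    · rw [coeff_pow, blockSizes_two_mul hq]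
      simp
    · rw [coeff_pow]
      exact sum_le_sum fun k _ => (le_abs_self _).trans (abs_prod ..).le
  · intro u hu hu'
    simp only [mem_insert, mem_Icc, mem_range] at hu hu'
    rcases Nat.eq_zero_or_pos u with rfl | hu0
    · simp [PowerSeries.coeff_one, show q ≠ 0 by omega]
    · rw [coeff_pow, blockSizes_eq_empty (by omega), sum_empty, zero_div]

theorem coeff_two_eq {F G : PowerSeries ℝ} (hF : F.constantCoeff = 1) (h1 : G.coeff 1 = 0)
    (h : PowerSeries.derivative ℝ F = PowerSeries.derivative ℝ G * F) :
    F.coeff 2 = G.coeff 2 := by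
  have h2 := congrArg (PowerSeries.coeff 1) h
  simp only [PowerSeries.coeff_derivative, PowerSeries.coeff_mul, Nat.antidiagonal_succ,
    Nat.antidiagonal_zero, sum_cons, map_singleton, sum_singleton] at h2
  simpa [hF, h1, one_add_one_eq_two] using h2

/-! ### Taylor series along a derivation -/

section Taylor

variable {A : Type*} [CommRing A] [Algebra ℝ A] (D : Derivation ℝ A A) (ε : A →ₐ[ℝ] ℝ)

/-- The series `∑ₖ ε(Dᵏ f) Xᵏ / k!`: the expansion of `f` along the flow of `D`, evaluated
by `ε`. -/
def taylor (f : A) : PowerSeries ℝ := PowerSeries.mk fun k => ε (D^[k] f) / k.factorial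

theorem coeff_taylor (f : A) (k : ℕ) : (taylor D ε f).coeff k = ε (D^[k] f) / k.factorial :=
  PowerSeries.coeff_mk ..

theorem derivative_taylor (f : A) :
    PowerSeries.derivative ℝ (taylor D ε f) = taylor D ε (D f) := by
  ext k
  have : (k : ℝ) + 1 ≠ 0 := Nat.cast_add_one_ne_zero k
  rw [PowerSeries.coeff_derivative, coeff_taylor, coeff_taylor, Function.iterate_succ_apply,
    Nat.factorial_succ]
  push_cast
  field_simp

theorem taylor_add (f g : A) : taylor D ε (f + g) = taylor D ε f + taylor D ε g := by
  ext k
  simp only [map_add, coeff_taylor, iterate_map_add, add_div]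

theorem taylor_mul (f g : A) : taylor D ε (f * g) = taylor D ε f * taylor D ε g := by
  ext k
  induction k generalizing f g with
  | zero => simp [coeff_taylor, PowerSeries.coeff_mul]
  | succ k ih =>
    refine mul_right_cancel₀ (Nat.cast_add_one_ne_zero k : (k : ℝ) + 1 ≠ 0) ?_
    rw [← PowerSeries.coeff_derivative, ← PowerSeries.coeff_derivative, derivative_taylor,
      D.leibniz, smul_eq_mul, smul_eq_mul, taylor_add, Derivation.leibniz, derivative_taylor,
      derivative_taylor, smul_eq_mul, smul_eq_mul, map_add, map_add, ih, ih]

end Taylor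

/-! ### Iterated sums of partial derivatives -/

namespace MultisetSeries

section SumPDeriv

variable {ι R : Type*} [CommRing R]

/-- The derivative in the direction `∑ a ∈ S, xₐ`. Evaluated at `0`, its `k`-th power sums
the values of a series over all `k`-tuples of indices in `S`. -/
def sumPDeriv (S : Finset ι) : Derivation R (MultisetSeries ι R) (MultisetSeries ι R) :=
  ∑ a ∈ S, pderiv a

theorem sumPDeriv_eq_sum (S : Finset ι) (f : MultisetSeries ι R) :
    sumPDeriv S f = ∑ a ∈ S, pderiv a f := by
  rw [sumPDeriv, ← Derivation.coeFnAddMonoidHom_apply, map_sum, Finset.sum_apply]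
  rfl

theorem sumPDeriv_apply (S : Finset ι) (f : MultisetSeries ι R) (s : Multiset ι) :
    sumPDeriv S f s = ∑ a ∈ S, f (a ::ₘ s) := by
  rw [sumPDeriv_eq_sum]
  exact Finset.sum_apply ..

theorem sumPDeriv_insert [DecidableEq ι] {S : Finset ι} {a : ι} (ha : a ∉ S)
    (f : MultisetSeries ι R) :
    sumPDeriv (insert a S) f = sumPDeriv S f + pderiv a f := by
  rw [sumPDeriv_eq_sum, sum_insert ha, sumPDeriv_eq_sum, add_comm]

theorem pderiv_sumPDeriv (S : Finset ι) (a : ι) (f : MultisetSeries ι R) :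
    pderiv a (sumPDeriv S f) = sumPDeriv S (pderiv a f) := by
  funext s
  simp only [pderiv_apply, sumPDeriv_apply, Multiset.cons_swap]

theorem iterate_sumPDeriv_smul (S : Finset ι) (k : ℕ) (r : R) (f : MultisetSeries ι R) :
    (sumPDeriv S)^[k] (r • f) = r • (sumPDeriv S)^[k] f :=
  Function.Commute.iterate_left (Derivation.map_smul (sumPDeriv S) r) k f

variable [LinearOrder R] [IsStrictOrderedRing R] {f g : MultisetSeries ι R} {S T : Finset ι}

theorem sumPDeriv_nonneg (hf : ∀ s, 0 ≤ f s) (s : Multiset ι) : 0 ≤ sumPDeriv S f s := by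
  rw [sumPDeriv_apply]
  exact sum_nonneg fun a _ => hf _

theorem iterate_sumPDeriv_mono {k : ℕ}
    (h : ∀ s : Multiset ι, s.card = k → (∀ i ∈ s, i ∈ S) → f s ≤ g s) :
    ((sumPDeriv S)^[k] f) 0 ≤ ((sumPDeriv S)^[k] g) 0 := by
  induction k generalizing f g with
  | zero => exact h 0 rfl (by simp)
  | succ k ih =>
    refine ih fun s hs hsS => ?_
    rw [sumPDeriv_apply, sumPDeriv_apply]
    refine sum_le_sum fun a ha => h _ (by simp [hs]) fun i hi => ?_
    rcases Multiset.mem_cons.1 hi with rfl | hi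
    exacts [ha, hsS i hi]

theorem iterate_sumPDeriv_congr {k : ℕ}
    (h : ∀ s : Multiset ι, s.card = k → (∀ i ∈ s, i ∈ S) → f s = g s) :
    ((sumPDeriv S)^[k] f) 0 = ((sumPDeriv S)^[k] g) 0 :=
  le_antisymm (iterate_sumPDeriv_mono fun s hs hsS => (h s hs hsS).le)
    (iterate_sumPDeriv_mono fun s hs hsS => (h s hs hsS).ge)

theorem abs_iterate_sumPDeriv_le {k : ℕ}
    (h : ∀ s : Multiset ι, s.card = k → (∀ i ∈ s, i ∈ S) → |f s| ≤ g s) :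
    |((sumPDeriv S)^[k] f) 0| ≤ ((sumPDeriv S)^[k] g) 0 := by
  refine abs_le'.2 ⟨iterate_sumPDeriv_mono fun s hs hsS => (le_abs_self _).trans (h s hs hsS), ?_⟩
  have neg_apply : -((sumPDeriv S)^[k] f) 0 = ((sumPDeriv S)^[k] (-f)) 0 := by
    rw [iterate_map_neg]
    rfl
  rw [neg_apply]
  exact iterate_sumPDeriv_mono fun s hs hsS => (neg_le_abs _).trans (h s hs hsS)

theorem iterate_sumPDeriv_mono_set (hST : S ⊆ T) (hf : ∀ s, 0 ≤ f s) (k : ℕ) :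
    ((sumPDeriv S)^[k] f) 0 ≤ ((sumPDeriv T)^[k] f) 0 := by
  induction k generalizing f with
  | zero => exact le_rfl
  | succ k ih =>
    have hmono : ((sumPDeriv S)^[k] (sumPDeriv S f)) 0 ≤ ((sumPDeriv S)^[k] (sumPDeriv T f)) 0 := by
      refine iterate_sumPDeriv_mono fun s _ _ => ?_
      rw [sumPDeriv_apply, sumPDeriv_apply]
      exact sum_le_sum_of_subset_of_nonneg hST fun a _ _ => hf _
    exact hmono.trans (ih (sumPDeriv_nonneg hf))

theorem iterate_sumPDeriv_insert_le [DecidableEq ι] {a : ι} (ha : a ∉ S) (hf : ∀ s, 0 ≤ f s)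
    (k : ℕ) :
    ((sumPDeriv (insert a S))^[k + 1] f) 0 ≤
      ((sumPDeriv S)^[k + 1] f) 0 + (k + 1) * ((sumPDeriv (insert a S))^[k] (pderiv a f)) 0 := by
  induction k generalizing f with
  | zero => simp [sumPDeriv_insert ha]
  | succ k ih =>
    have hstep := ih (sumPDeriv_nonneg (S := insert a S) hf)
    rw [pderiv_sumPDeriv, sumPDeriv_insert ha f, iterate_map_add (sumPDeriv S), add_apply] at hstep
    have hmono := iterate_sumPDeriv_mono_set (subset_insert a S) (f := pderiv a f)
      (fun s => hf _) (k + 1)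
    simp only [Function.iterate_succ_apply] at hstep hmono ⊢
    rw [sumPDeriv_insert ha f]
    push_cast
    linarith

end SumPDeriv

section Depth

/-- The distance from `a` down to the smallest element of `s`, which is meant to lie in
`[0, a]`. -/
def depth (a : ℕ) (s : Multiset ℕ) : ℕ := (s.map (a - ·)).sup

@[simp] theorem depth_zero (a : ℕ) : depth a 0 = 0 := rfl

theorem depth_cons (a b : ℕ) (s : Multiset ℕ) : depth a (b ::ₘ s) = max (a - b) (depth a s) := by
  simp [depth]

theorem depth_cons_of_le {a b : ℕ} (hba : b ≤ a) {s : Multiset ℕ} (hs : ∀ i ∈ s, i ≤ b) :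
    depth a (b ::ₘ s) = a - b + depth b s := by
  induction s using Multiset.induction with
  | empty => simp [depth]
  | cons i s ih =>
    have hib := hs i (Multiset.mem_cons_self i s)
    specialize ih fun i hi => hs i (Multiset.mem_cons_of_mem hi)
    rw [depth_cons] at ih ⊢
    rw [depth_cons, depth_cons]
    omega

theorem depth_add (a : ℕ) (s t : Multiset ℕ) : depth a (s + t) = max (depth a s) (depth a t) := by
  simp [depth]

theorem iterate_sumPDeriv_range_le {R : Type*} [CommRing R] [LinearOrder R]
    [IsStrictOrderedRing R] {f : MultisetSeries ℕ R} (hf : ∀ s, 0 ≤ f s) (k n : ℕ) :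
    ((sumPDeriv (range n))^[k + 1] f) 0 ≤
      (k + 1) * ∑ a ∈ range n, ((sumPDeriv (range (a + 1)))^[k] (pderiv a f)) 0 := by
  induction n with
  | zero => simp [Function.iterate_succ_apply', sumPDeriv_apply]
  | succ n ih =>
    rw [sum_range_succ, mul_add, range_add_one]
    exact (iterate_sumPDeriv_insert_le notMem_range_self hf k).trans (add_le_add_left ih _)

variable {θ : ℝ}

theorem sum_range_succ_pow_sub_le (h0 : 0 ≤ θ) (h1 : θ < 1) (a : ℕ) :
    ∑ b ∈ range (a + 1), θ ^ (a - b) ≤ (1 - θ)⁻¹ := by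
  rw [← sum_range_reflect]
  calc ∑ b ∈ range (a + 1), θ ^ (a - (a + 1 - 1 - b)) = ∑ b ∈ range (a + 1), θ ^ b :=
        sum_congr rfl fun b hb => by congr 1; rw [mem_range] at hb; omega
    _ ≤ (1 - θ)⁻¹ := by
        rw [← tsum_geometric_of_lt_one h0 h1]
        exact (summable_geometric_of_lt_one h0 h1).sum_le_tsum _ fun b _ => by positivity

/-- The series of weights `θ ^ depth a s`. -/
def powDepth (θ : ℝ) (a : ℕ) : MultisetSeries ℕ ℝ := fun s => θ ^ depth a s

theorem powDepth_apply (θ : ℝ) (a : ℕ) (s : Multiset ℕ) : powDepth θ a s = θ ^ depth a s := rfl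

theorem powDepth_nonneg (h0 : 0 ≤ θ) (a : ℕ) (s : Multiset ℕ) : 0 ≤ powDepth θ a s :=
  pow_nonneg h0 _

theorem powDepth_cons_of_le {a b : ℕ} (hba : b ≤ a) {s : Multiset ℕ} (hs : ∀ i ∈ s, i ≤ b) :
    powDepth θ a (b ::ₘ s) = θ ^ (a - b) * powDepth θ b s := by
  rw [powDepth_apply, depth_cons_of_le hba hs, pow_add, powDepth_apply]

theorem iterate_sumPDeriv_powDepth_le (h0 : 0 ≤ θ) (h1 : θ < 1) (k a : ℕ) :
    ((sumPDeriv (range (a + 1)))^[k] (powDepth θ a)) 0 ≤ k.factorial * (1 - θ)⁻¹ ^ k := by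
  have hC : 0 ≤ (1 - θ)⁻¹ := inv_nonneg.2 (by linarith)
  induction k generalizing a with
  | zero => simp [powDepth_apply]
  | succ k ih =>
    have hterm (b : ℕ) (hb : b < a + 1) :
        ((sumPDeriv (range (b + 1)))^[k] (pderiv b (powDepth θ a))) 0 ≤
          θ ^ (a - b) * (k.factorial * (1 - θ)⁻¹ ^ k) := by
      refine (iterate_sumPDeriv_mono (g := θ ^ (a - b) • powDepth θ b) fun s _ hs => ?_).trans ?_
      · exact (powDepth_cons_of_le (Nat.lt_succ_iff.1 hb)
          fun i hi => Nat.lt_succ_iff.1 (mem_range.1 (hs i hi))).le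
      · rw [iterate_sumPDeriv_smul, smul_apply]
        exact mul_le_mul_of_nonneg_left (ih b) (pow_nonneg h0 _)
    calc _ ≤ (k + 1) * ∑ b ∈ range (a + 1),
          ((sumPDeriv (range (b + 1)))^[k] (pderiv b (powDepth θ a))) 0 :=
          iterate_sumPDeriv_range_le (powDepth_nonneg h0 a) k (a + 1)
      _ ≤ (k + 1) * ((∑ b ∈ range (a + 1), θ ^ (a - b)) *
          (k.factorial * (1 - θ)⁻¹ ^ k)) := by
          rw [sum_mul]
          gcongr with b hb
          exact hterm b (mem_range.1 hb)
      _ ≤ (k + 1) * ((1 - θ)⁻¹ * (k.factorial * (1 - θ)⁻¹ ^ k)) := by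
          gcongr
          exact sum_range_succ_pow_sub_le h0 h1 a
      _ = (k + 1).factorial * (1 - θ)⁻¹ ^ (k + 1) := by
          rw [Nat.factorial_succ, pow_succ]
          push_cast
          ring

theorem abs_iterate_sumPDeriv_range_le (h0 : 0 ≤ θ) (h1 : θ < 1) {C : ℝ} (hC : 0 ≤ C) {k n : ℕ}
    {f : MultisetSeries ℕ ℝ}
    (hf : ∀ a, ∀ s : Multiset ℕ, s.card = k → (∀ i ∈ s, i ≤ a) →
      |f (a ::ₘ s)| ≤ C * powDepth θ a s) :
    |((sumPDeriv (range n))^[k + 1] f) 0| ≤ n * ((k + 1).factorial * (C * (1 - θ)⁻¹ ^ k)) := by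
  let absf : MultisetSeries ℕ ℝ := fun s => |f s|
  have hterm (a : ℕ) : ((sumPDeriv (range (a + 1)))^[k] (pderiv a absf)) 0 ≤
      C * (k.factorial * (1 - θ)⁻¹ ^ k) := by
    refine (iterate_sumPDeriv_mono (g := C • powDepth θ a) fun s hs hsa => ?_).trans ?_
    · exact hf a s hs fun i hi => Nat.lt_succ_iff.1 (mem_range.1 (hsa i hi))
    · rw [iterate_sumPDeriv_smul, smul_apply]
      exact mul_le_mul_of_nonneg_left (iterate_sumPDeriv_powDepth_le h0 h1 k a) hC
  calc _ ≤ ((sumPDeriv (range n))^[k + 1] absf) 0 :=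
        abs_iterate_sumPDeriv_le fun s _ _ => le_rfl
    _ ≤ (k + 1) * ∑ a ∈ range n, ((sumPDeriv (range (a + 1)))^[k] (pderiv a absf)) 0 :=
        iterate_sumPDeriv_range_le (fun s => abs_nonneg _) k n
    _ ≤ (k + 1) * ∑ a ∈ range n, C * (k.factorial * (1 - θ)⁻¹ ^ k) := by
        gcongr
        exact hterm _
    _ = n * ((k + 1).factorial * (C * (1 - θ)⁻¹ ^ k)) := by
        rw [sum_const, card_range, nsmul_eq_mul, Nat.factorial_succ]
        push_cast
        ring

end Depth

end MultisetSeries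

/-! ### Products of series with factorial growth -/

namespace MultisetSeries

section Factorial

/-- The series whose value at `s` only depends on the cardinality of `s`. -/
def ofCard {R : Type*} (ι : Type*) (φ : ℕ → R) : MultisetSeries ι R := fun s => φ s.card

theorem ofCard_mul_ofCard_apply {ι R : Type*} [CommRing R] (φ ψ : ℕ → R) (s : Multiset ι) :
    (ofCard ι φ * ofCard ι ψ) s = ∑ p ∈ HasAntidiagonal.antidiagonal s.card,
      (s.card.choose p.1 : R) * (φ p.1 * ψ p.2) := by
  have shift_ofCard (φ : ℕ → R) (a : ι) : shift a (ofCard ι φ) = ofCard ι fun i => φ (i + 1) := by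
    funext s
    exact congrArg φ (Multiset.card_cons a s)
  induction s using Multiset.induction_on generalizing φ ψ with
  | empty => simp [mul_apply_zero, ofCard]
  | cons a s ih =>
    rw [mul_apply_cons, shift_ofCard, shift_ofCard, ih, ih, Multiset.card_cons,
      sum_antidiagonal_choose_succ_mul fun i j => φ i * ψ j]
    congr 1
    refine sum_congr rfl fun p hp => ?_
    rw [Nat.choose_symm_of_eq_add (HasAntidiagonal.mem_antidiagonal.1 hp).symm]

theorem ofCard_factorial_mul_apply {ι R : Type*} [CommRing R] (s : Multiset ι) :
    (ofCard ι (fun i => if i = 0 then 0 else (i.factorial : R)) *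
      ofCard ι fun i => (i.factorial : R)) s = s.card * s.card.factorial := by
  rw [ofCard_mul_ofCard_apply, Nat.sum_antidiagonal_eq_sum_range_succ_mk, sum_range_succ']
  have hterm (i : ℕ) (hi : i ∈ range s.card) :
      (s.card.choose (i + 1) : R) * ((if i + 1 = 0 then 0 else ((i + 1).factorial : R)) *
        ((s.card - (i + 1)).factorial : R)) = s.card.factorial := by
    rw [if_neg i.succ_ne_zero, ← mul_assoc]
    exact_mod_cast congrArg (Nat.cast (R := R))
      (Nat.choose_mul_factorial_mul_factorial (mem_range.1 hi))
  rw [sum_congr rfl hterm]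
  simp

/-- The series of weights `|s|! B^|s| θ ^ depth a s`, by which cumulants of a geometrically
mixing sequence at the times `s` are bounded. -/
def mixingWeight (B θ : ℝ) (a : ℕ) : MultisetSeries ℕ ℝ :=
  fun s => s.card.factorial * B ^ s.card * powDepth θ a s

variable {B θ : ℝ} {a : ℕ}

theorem mixingWeight_zero (B θ : ℝ) (a : ℕ) : mixingWeight B θ a 0 = 1 := by
  simp [mixingWeight, powDepth_apply]

theorem mixingWeight_cons_of_le (B θ : ℝ) {b : ℕ} (hba : b ≤ a) {s : Multiset ℕ}
    (hs : ∀ i ∈ s, i ≤ b) :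
    mixingWeight B θ a (b ::ₘ s) = (s.card + 1) * B * θ ^ (a - b) * mixingWeight B θ b s := by
  simp only [mixingWeight, powDepth_cons_of_le hba hs, Multiset.card_cons, Nat.factorial_succ]
  push_cast
  ring

theorem powDepth_mul_powDepth_le (h0 : 0 ≤ θ) (h1 : θ ≤ 1) (a : ℕ) (s t : Multiset ℕ) :
    powDepth θ a s * powDepth θ a t ≤ powDepth θ a (s + t) := by
  rw [powDepth_apply, powDepth_apply, powDepth_apply, ← pow_add, depth_add]
  exact pow_le_pow_of_le_one h0 h1 (by omega)

theorem abs_mul_apply_le {C C' : ℝ} (hB : 0 ≤ B) (h0 : 0 ≤ θ) (h1 : θ ≤ 1) (hC : 0 ≤ C)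
    (hC' : 0 ≤ C') {s : Multiset ℕ} {f g : MultisetSeries ℕ ℝ} (hf0 : f 0 = 0)
    (hf : ∀ t ≤ s, |f t| ≤ C * mixingWeight B θ a t)
    (hg : ∀ t ≤ s, |g t| ≤ C' * mixingWeight B θ a t) :
    |(f * g) s| ≤ C * C' * (s.card * mixingWeight B θ a s) := by
  have hterm (p : Multiset ℕ × Multiset ℕ) (hp : p ∈ s.antidiagonal) :
      |f p.1 * g p.2| ≤ C * C' * B ^ s.card * powDepth θ a s *
        ((if p.1.card = 0 then 0 else (p.1.card.factorial : ℝ)) * p.2.card.factorial) := by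
    obtain rfl := Multiset.mem_antidiagonal.1 hp
    rcases eq_or_ne p.1 0 with hp1 | hp1
    · simp [hp1, hf0]
    rw [if_neg (by simpa using hp1), abs_mul]
    calc |f p.1| * |g p.2|
        ≤ (C * mixingWeight B θ a p.1) * (C' * mixingWeight B θ a p.2) := by
          refine mul_le_mul (hf _ (Multiset.le_add_right ..)) (hg _ (Multiset.le_add_left ..))
            (abs_nonneg _) ((abs_nonneg _).trans (hf _ (Multiset.le_add_right ..)))
      _ = C * C' * B ^ (p.1 + p.2).card * (powDepth θ a p.1 * powDepth θ a p.2) *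
            (p.1.card.factorial * p.2.card.factorial) := by
          rw [mixingWeight, mixingWeight, Multiset.card_add]
          ring
      _ ≤ _ := by
          gcongr
          exact powDepth_mul_powDepth_le h0 h1 a _ _
  calc |(f * g) s| ≤ (s.antidiagonal.map fun p => |f p.1 * g p.2|).sum := by
        rw [mul_apply]
        exact (Multiset.abs_sum_le_sum_abs ..).trans_eq (by rw [Multiset.map_map]; rfl)
    _ ≤ _ := Multiset.sum_map_le_sum_map _ _ hterm
    _ = C * C' * B ^ s.card * powDepth θ a s * (s.card * s.card.factorial) := by
        rw [Multiset.sum_map_mul_left, ← ofCard_factorial_mul_apply]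
        rfl
    _ = _ := by
        rw [mixingWeight]
        ring

end Factorial

end MultisetSeries

/-! ### Joint moments and cumulants -/

section Cumulants

variable {ι Ω : Type*} [MeasurableSpace Ω] (P : Measure Ω) (Y : ι → Ω → ℝ)

/-- The formal series of `x ↦ E[Z exp(∑ᵢ xᵢ Yᵢ)]`. -/
def jointMoment (Z : Ω → ℝ) : MultisetSeries ι ℝ :=
  fun s => ∫ ω, (s.map (Y · ω)).prod * Z ω ∂P

/-- The formal series of `x ↦ E[Z exp(∑ᵢ xᵢ Yᵢ)] / E[exp(∑ᵢ xᵢ Yᵢ)]`, the mean of `Z` under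
the exponentially tilted law. Its value at `s` is the joint cumulant of `Z` and the `Yᵢ`,
`i ∈ s`. -/
def tiltedMean (Z : Ω → ℝ) : MultisetSeries ι ℝ :=
  jointMoment P Y Z * Ring.inverse (jointMoment P Y fun _ => 1)

variable {P Y}

theorem jointMoment_apply (Z : Ω → ℝ) (s : Multiset ι) :
    jointMoment P Y Z s = ∫ ω, (s.map (Y · ω)).prod * Z ω ∂P := rfl

theorem jointMoment_apply_zero (Z : Ω → ℝ) : jointMoment P Y Z 0 = ∫ ω, Z ω ∂P := by
  simp [jointMoment_apply]

theorem pderiv_jointMoment (i : ι) (Z : Ω → ℝ) :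
    MultisetSeries.pderiv i (jointMoment P Y Z) = jointMoment P Y fun ω => Y i ω * Z ω := by
  funext s
  simp only [MultisetSeries.pderiv_apply, jointMoment_apply, Multiset.map_cons,
    Multiset.prod_cons, mul_comm (Y i _), mul_assoc]

theorem integrable_multiset_prod_mul [IsFiniteMeasure P] {a b : ℝ≥0∞} {Z : Ω → ℝ}
    {s : Multiset ι} (hY : ∀ i, MemLp (Y i) b⁻¹ P) (hZ : MemLp Z a⁻¹ P)
    (h : s.card * b + a ≤ 1) : Integrable (fun ω => (s.map (Y · ω)).prod * Z ω) P := by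
  induction s using Multiset.induction_on generalizing a Z with
  | empty => simpa using hZ.integrable (ENNReal.one_le_inv.2 (by simpa using h))
  | cons i s ih =>
    have : ENNReal.HolderTriple b⁻¹ a⁻¹ (b + a)⁻¹ := ⟨by simp only [inv_inv]⟩
    have hcons : s.card * b + (b + a) ≤ 1 := by
      rwa [Multiset.card_cons, Nat.cast_succ, add_mul, one_mul, add_assoc] at h
    simpa only [Multiset.map_cons, Multiset.prod_cons, Pi.mul_apply, mul_assoc, mul_left_comm]
      using ih (hZ.mul (hY i)) hcons

theorem iterate_sumPDeriv_jointMoment {S : Finset ι} {k : ℕ} {Z : Ω → ℝ}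
    (hZ : ∀ s : Multiset ι, s.card = k → Integrable (fun ω => (s.map (Y · ω)).prod * Z ω) P) :
    ((MultisetSeries.sumPDeriv S)^[k] (jointMoment P Y Z)) 0 =
      ∫ ω, (∑ i ∈ S, Y i ω) ^ k * Z ω ∂P := by
  induction k generalizing Z with
  | zero => simp [jointMoment_apply_zero]
  | succ k ih =>
    have hZcons {s : Multiset ι} (hs : s.card = k) (i : ι) :
        Integrable (fun ω => (s.map (Y · ω)).prod * (Y i ω * Z ω)) P := by
      simpa [mul_assoc, mul_comm, mul_left_comm] using hZ (i ::ₘ s) (by simp [hs])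
    have hsum (s : Multiset ι) :
        (fun ω => (s.map (Y · ω)).prod * ((∑ i ∈ S, Y i ω) * Z ω)) =
          fun ω => ∑ i ∈ S, (s.map (Y · ω)).prod * (Y i ω * Z ω) := by
      simp only [sum_mul, mul_sum]
    have hstep (s : Multiset ι) (hs : s.card = k) :
        MultisetSeries.sumPDeriv S (jointMoment P Y Z) s =
          jointMoment P Y (fun ω => (∑ i ∈ S, Y i ω) * Z ω) s := by
      rw [MultisetSeries.sumPDeriv_apply, jointMoment_apply, hsum s,
        integral_finsetSum _ fun i _ => hZcons hs i]
      exact sum_congr rfl fun i _ => congrFun (pderiv_jointMoment i Z) s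
    rw [Function.iterate_succ_apply, MultisetSeries.iterate_sumPDeriv_congr
      fun s hs _ => hstep s hs, ih fun s hs => ?_]
    · simp only [pow_succ, mul_assoc]
    · rw [hsum s]
      exact integrable_finsetSum _ fun i _ => hZcons hs i

theorem coeff_taylor_jointMoment_one {S : Finset ι} {k : ℕ}
    (hint : ∀ s : Multiset ι, s.card = k → Integrable (fun ω => (s.map (Y · ω)).prod) P) :
    (taylor (MultisetSeries.sumPDeriv S) MultisetSeries.constantTerm
      (jointMoment P Y fun _ => 1)).coeff k = (∫ ω, (∑ i ∈ S, Y i ω) ^ k ∂P) / k.factorial := by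
  rw [coeff_taylor, MultisetSeries.constantTerm_apply,
    iterate_sumPDeriv_jointMoment (by simpa using hint)]
  simp only [mul_one]

variable [IsProbabilityMeasure P]

theorem isUnit_jointMoment_one : IsUnit (jointMoment P Y fun _ => 1) :=
  MultisetSeries.isUnit_of_apply_zero_eq_one (by simp [jointMoment_apply_zero])

theorem tiltedMean_mul_jointMoment_one (Z : Ω → ℝ) :
    tiltedMean P Y Z * jointMoment P Y (fun _ => 1) = jointMoment P Y Z := by
  rw [tiltedMean, mul_assoc, Ring.inverse_mul_cancel _ isUnit_jointMoment_one, mul_one]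

theorem tiltedMean_apply_zero (Z : Ω → ℝ) : tiltedMean P Y Z 0 = ∫ ω, Z ω ∂P := by
  have h := congrFun (tiltedMean_mul_jointMoment_one (P := P) (Y := Y) Z) 0
  rw [MultisetSeries.mul_apply_zero, jointMoment_apply_zero, jointMoment_apply_zero] at h
  simpa using h

theorem tiltedMean_apply_congr_add_const {Z Z' : Ω → ℝ} {c : ℝ} {s : Multiset ι} (hs : s ≠ 0)
    (h : ∀ t ≤ s, jointMoment P Y Z t =
      jointMoment P Y Z' t + c * jointMoment P Y (fun _ => 1) t) :
    tiltedMean P Y Z s = tiltedMean P Y Z' s := by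
  have hmul : tiltedMean P Y Z s = ((jointMoment P Y Z' + c • jointMoment P Y fun _ => 1) *
      Ring.inverse (jointMoment P Y fun _ => 1)) s :=
    MultisetSeries.mul_apply_congr h fun _ _ => rfl
  rw [hmul, add_mul, smul_mul_assoc, Ring.mul_inverse_cancel _ isUnit_jointMoment_one,
    MultisetSeries.add_apply, MultisetSeries.smul_apply, MultisetSeries.one_apply,
    if_neg (Multiset.card_eq_zero.not.2 hs), mul_zero, add_zero, tiltedMean]

theorem pderiv_tiltedMean (i : ι) (Z : Ω → ℝ) :
    MultisetSeries.pderiv i (tiltedMean P Y Z) =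
      tiltedMean P Y (fun ω => Y i ω * Z ω) - tiltedMean P Y Z * tiltedMean P Y (Y i) := by
  have hinv := Ring.inverse_mul_cancel _ (isUnit_jointMoment_one (P := P) (Y := Y))
  rw [tiltedMean, Derivation.leibniz, Derivation.leibniz_of_mul_eq_one _ hinv, pderiv_jointMoment,
    pderiv_jointMoment]
  simp only [mul_one, smul_eq_mul, tiltedMean]
  ring

variable (P Y) in
theorem exists_cumulants : ∃ κ : MultisetSeries ι ℝ,
    κ 0 = 0 ∧ ∀ i, MultisetSeries.pderiv i κ = tiltedMean P Y (Y i) := by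
  refine MultisetSeries.exists_pderiv_eq fun i j => ?_
  simp only [pderiv_tiltedMean, mul_comm]

variable {κ : MultisetSeries ι ℝ}

theorem sumPDeriv_jointMoment_one (hκ : ∀ i, MultisetSeries.pderiv i κ = tiltedMean P Y (Y i))
    (S : Finset ι) :
    MultisetSeries.sumPDeriv S (jointMoment P Y fun _ => 1) =
      MultisetSeries.sumPDeriv S κ * jointMoment P Y fun _ => 1 := by
  simp only [MultisetSeries.sumPDeriv_eq_sum, sum_mul, hκ, tiltedMean_mul_jointMoment_one,
    pderiv_jointMoment, mul_one]

/-- The `k`-th cumulant of `∑ i ∈ S, Y i`, in terms of the series `κ` of the joint cumulants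
of the `Y i`. -/
def sumCumulant (κ : MultisetSeries ι ℝ) (S : Finset ι) (k : ℕ) : ℝ :=
  ((MultisetSeries.sumPDeriv S)^[k] κ) 0

theorem sumCumulant_one (hκ : ∀ i, MultisetSeries.pderiv i κ = tiltedMean P Y (Y i))
    (S : Finset ι) : sumCumulant κ S 1 = ∑ i ∈ S, ∫ ω, Y i ω ∂P := by
  rw [sumCumulant, Function.iterate_one, MultisetSeries.sumPDeriv_apply]
  refine sum_congr rfl fun i _ => ?_
  rw [← tiltedMean_apply_zero (Y := Y), ← hκ, MultisetSeries.pderiv_apply]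

theorem integral_sum_pow_two_mul_le (h0 : κ 0 = 0)
    (hκ : ∀ i, MultisetSeries.pderiv i κ = tiltedMean P Y (Y i)) {S : Finset ι} {q : ℕ}
    (hq : 1 ≤ q) (hint : ∀ s : Multiset ι, s.card ≤ 2 * q →
      Integrable (fun ω => (s.map (Y · ω)).prod) P)
    (hmean : ∀ i ∈ S, ∫ ω, Y i ω ∂P = 0) :
    ∫ ω, (∑ i ∈ S, Y i ω) ^ (2 * q) ∂P ≤
      gaussMoment q * (∫ ω, (∑ i ∈ S, Y i ω) ^ 2 ∂P) ^ q +
      (2 * q).factorial * ∑ u ∈ Icc 1 (q - 1), (∑ k ∈ blockSizes u (2 * q),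
        ∏ i, |sumCumulant κ S (k i) / (k i : ℕ).factorial|) / (u.factorial : ℝ) := by
  set F := taylor (MultisetSeries.sumPDeriv S) MultisetSeries.constantTerm
    (jointMoment P Y fun _ => 1) with hF
  set G := taylor (MultisetSeries.sumPDeriv S) MultisetSeries.constantTerm κ with hG
  have hGcoeff (k : ℕ) : G.coeff k = sumCumulant κ S k / k.factorial := coeff_taylor ..
  have hFcoeff {k : ℕ} (hk : k ≤ 2 * q) :
      F.coeff k = (∫ ω, (∑ i ∈ S, Y i ω) ^ k ∂P) / k.factorial :=
    coeff_taylor_jointMoment_one fun s hs => hint s (hs.trans_le hk)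
  have hG0 : G.coeff 0 = 0 := by simp [hGcoeff, sumCumulant, h0]
  have hG1 : G.coeff 1 = 0 := by rw [hGcoeff, sumCumulant_one hκ, sum_eq_zero hmean, zero_div]
  have hF0 : F.constantCoeff = 1 := by
    rw [← PowerSeries.coeff_zero_eq_constantCoeff_apply, hFcoeff (Nat.zero_le _)]
    simp
  have hFG : PowerSeries.derivative ℝ F = PowerSeries.derivative ℝ G * F := by
    rw [hF, hG, derivative_taylor, derivative_taylor, ← taylor_mul, sumPDeriv_jointMoment_one hκ]
  have hG2 : G.coeff 2 = (∫ ω, (∑ i ∈ S, Y i ω) ^ 2 ∂P) / 2 := by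
    rw [← coeff_two_eq hF0 hG1 hFG, hFcoeff (by omega), Nat.factorial_two, Nat.cast_two]
  have hfact : (0 : ℝ) < (2 * q).factorial := by positivity
  have key := coeff_two_mul_le hF0 hG0 hG1 hFG hq
  rw [hFcoeff le_rfl, hG2, div_le_iff₀' hfact, mul_add] at key
  simp only [hGcoeff] at key
  refine key.trans_eq (congrArg (· + _) ?_)
  rw [gaussMoment, div_pow]
  field_simp

end Cumulants

/-! ### The Markov property -/

section KernelIntegral

variable {X Y : Type*} [MeasurableSpace X] [MeasurableSpace Y] {κ : Kernel X Y} {μ : Measure X}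
  {f : Y → ℝ}

theorem integrable_integral_of_integrable_comp (hf : Integrable f (κ ∘ₘ μ)) :
    Integrable (fun x => ∫ y, f y ∂(κ x)) μ := by
  rw [Measure.comp_eq_comp_const_apply] at hf
  simpa using hf.integral_comp

theorem integral_measure_comp (hf : Integrable f (κ ∘ₘ μ)) :
    ∫ y, f y ∂(κ ∘ₘ μ) = ∫ x, ∫ y, f y ∂(κ x) ∂μ := by
  rw [Measure.comp_eq_comp_const_apply] at hf ⊢
  rw [Kernel.integral_comp hf, Kernel.const_apply]

end KernelIntegral

section MarkovProperty

variable {X Ω : Type*} [MeasurableSpace X] {Q : Kernel X X} {π : Measure X}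

instance isMarkovKernel_kIter [IsMarkovKernel Q] (n : ℕ) : IsMarkovKernel (kIter Q n) := by
  induction n with
  | zero => exact inferInstanceAs (IsMarkovKernel Kernel.id)
  | succ n ih => exact inferInstanceAs (IsMarkovKernel ((kIter Q n).comp Q))

theorem invariant_kIter (hπ : Kernel.Invariant Q π) (n : ℕ) : Kernel.Invariant (kIter Q n) π := by
  induction n with
  | zero => exact Measure.id_comp
  | succ n ih => exact ih.comp hπ

/-- The σ-algebra generated by the variables `Xs 0, …, Xs n`. -/
abbrev past (Xs : ℕ → Ω → X) (n : ℕ) : MeasurableSpace Ω :=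
  ⨆ i ∈ range (n + 1), MeasurableSpace.comap (Xs i) inferInstance

theorem measurable_past {Xs : ℕ → Ω → X} {i n : ℕ} (h : i ≤ n) : Measurable[past Xs n] (Xs i) :=
  (comap_measurable (Xs i)).mono
    (le_iSup₂_of_le i (mem_range.2 (Nat.lt_succ_of_le h)) le_rfl) le_rfl

theorem past_mono {Xs : ℕ → Ω → X} {m n : ℕ} (h : m ≤ n) : past Xs m ≤ past Xs n :=
  iSup₂_le fun _ hi => measurable_iff_comap_le.1
    (measurable_past ((Nat.lt_succ_iff.1 (mem_range.1 hi)).trans h))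

namespace IsMarkovChain

variable [MeasurableSpace Ω] {P : Measure Ω} {Xs : ℕ → Ω → X} {ξ : Measure X} {A : Set Ω}

theorem past_le (h : IsMarkovChain P Xs ξ Q) (n : ℕ) : past Xs n ≤ ‹MeasurableSpace Ω› :=
  iSup₂_le fun i _ => (h.meas i).comap_le

variable [IsProbabilityMeasure P]

theorem measureReal_inter_preimage_succ (h : IsMarkovChain P Xs ξ Q) {n : ℕ}
    (hA : MeasurableSet[past Xs n] A) {B : Set X} (hB : MeasurableSet B) :
    P.real (A ∩ Xs (n + 1) ⁻¹' B) = ∫ ω in A, (Q (Xs n ω)).real B ∂P := by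
  have hpre : MeasurableSet (Xs (n + 1) ⁻¹' B) := h.meas _ hB
  have hmarkov : P[(Xs (n + 1) ⁻¹' B).indicator (1 : Ω → ℝ) | past Xs n] =ᵐ[P]
      fun ω => (Q (Xs n ω)).real B := by
    simp only [← integral_indicator_one hB]
    refine h.markov n (B.indicator 1) (measurable_one.indicator hB) fun x => ?_
    by_cases hx : x ∈ B <;> simp [hx]
  have hint : Integrable ((Xs (n + 1) ⁻¹' B).indicator (1 : Ω → ℝ)) P :=
    (integrable_const (1 : ℝ)).indicator hpre
  rw [← setIntegral_congr_ae (h.past_le n _ hA) (hmarkov.mono fun ω hω _ => hω),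
    setIntegral_condExp (h.past_le n) hint hA, setIntegral_indicator hpre]
  simp

variable [IsMarkovKernel Q]

theorem map_restrict_succ (h : IsMarkovChain P Xs ξ Q) {n : ℕ}
    (hA : MeasurableSet[past Xs n] A) :
    (P.restrict A).map (Xs (n + 1)) = Q ∘ₘ (P.restrict A).map (Xs n) := by
  ext B hB
  have hpre : MeasurableSet (Xs (n + 1) ⁻¹' B) := h.meas _ hB
  have hmeas := Q.measurable_coe hB
  have hreal := h.measureReal_inter_preimage_succ hA hB
  rw [Measure.map_apply (h.meas _) hB, Measure.restrict_apply hpre, Set.inter_comm,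
    Measure.bind_apply hB Q.aemeasurable, lintegral_map hmeas (h.meas n),
    ← ofReal_measureReal, hreal, ofReal_integral_eq_lintegral_ofReal]
  · simp
  · exact Integrable.of_bound (hmeas.comp (h.meas n)).ennreal_toReal.aestronglyMeasurable 1
      (ae_of_all _ fun ω => by
        rw [Real.norm_of_nonneg measureReal_nonneg]
        exact measureReal_le_one)
  · exact ae_of_all _ fun ω => measureReal_nonneg

theorem map_restrict_add (h : IsMarkovChain P Xs ξ Q) (d : ℕ) {n : ℕ}
    (hA : MeasurableSet[past Xs n] A) :
    (P.restrict A).map (Xs (n + d)) = kIter Q d ∘ₘ (P.restrict A).map (Xs n) := by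
  induction d generalizing n with
  | zero => exact Measure.id_comp.symm
  | succ d ih =>
    rw [Nat.add_comm d, ← Nat.add_assoc, ih (past_mono n.le_succ _ hA), h.map_restrict_succ hA,
      Measure.comp_assoc, Nat.add_comm 1, kIter]

theorem map_eq (h : IsMarkovChain P Xs π Q) (hπ : Kernel.Invariant Q π) (n : ℕ) :
    P.map (Xs n) = π := by
  have hadd := h.map_restrict_add n (n := 0) (A := Set.univ) MeasurableSet.univ
  rwa [Measure.restrict_univ, Nat.zero_add, h.init, invariant_kIter hπ n] at hadd

theorem condExp_comp_add (h : IsMarkovChain P Xs ξ Q) (d n : ℕ) {f : X → ℝ} (hf : Measurable f)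
    (hint : Integrable (fun ω => f (Xs (n + d) ω)) P) :
    (fun ω => ∫ y, f y ∂(kIter Q d (Xs n ω))) =ᵐ[P] P[fun ω => f (Xs (n + d) ω) | past Xs n] := by
  have hmap (A : Set Ω) (hA : MeasurableSet[past Xs n] A) :
      Integrable f (kIter Q d ∘ₘ (P.restrict A).map (Xs n)) := by
    rw [← h.map_restrict_add d hA,
      integrable_map_measure hf.aestronglyMeasurable (h.meas _).aemeasurable]
    exact hint.restrict
  have hmeas : StronglyMeasurable fun x => ∫ y, f y ∂(kIter Q d x) :=
    hf.stronglyMeasurable.integral_kernel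
  refine ae_eq_condExp_of_forall_setIntegral_eq (h.past_le n) hint (fun A hA _ => ?_)
    (fun A hA _ => ?_)
    (hmeas.comp_measurable (measurable_past le_rfl)).aestronglyMeasurable
  · exact (integrable_integral_of_integrable_comp (hmap A hA)).comp_measurable (h.meas n)
  · rw [← integral_map (f := fun x => ∫ y, f y ∂(kIter Q d x)) (h.meas n).aemeasurable
        hmeas.aestronglyMeasurable,
      ← integral_measure_comp (hmap A hA), ← h.map_restrict_add d hA,
      integral_map (h.meas _).aemeasurable hf.aestronglyMeasurable]

theorem integral_mul_comp_add (h : IsMarkovChain P Xs ξ Q) (d n : ℕ) {φ : Ω → ℝ} {f : X → ℝ}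
    (hφ : StronglyMeasurable[past Xs n] φ) (hf : Measurable f)
    (hint : Integrable (fun ω => f (Xs (n + d) ω)) P)
    (hφint : Integrable (fun ω => φ ω * f (Xs (n + d) ω)) P) :
    ∫ ω, φ ω * f (Xs (n + d) ω) ∂P = ∫ ω, φ ω * ∫ y, f y ∂(kIter Q d (Xs n ω)) ∂P := by
  rw [← integral_condExp (h.past_le n)]
  refine integral_congr_ae ?_
  filter_upwards [condExp_mul_of_stronglyMeasurable_left hφ hφint hint,
    h.condExp_comp_add d n hf hint] with ω hpull hcond
  exact hpull.trans (congrArg (φ ω * ·) hcond.symm)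

end IsMarkovChain

end MarkovProperty

/-! ### Geometric ergodicity -/

section RpowBound

variable {X : Type*} [MeasurableSpace X]

theorem integral_rpow_le {μ : Measure X} [IsFiniteMeasure μ] {V : X → ℝ} (hV0 : ∀ x, 0 ≤ V x)
    (hV : Integrable V μ) {a : ℝ} (ha0 : 0 ≤ a) (ha1 : a ≤ 1)
    (hVa : Integrable (fun x => V x ^ a) μ) :
    ∫ x, V x ^ a ∂μ ≤ μ.real Set.univ ^ (1 - a) * (∫ x, V x ∂μ) ^ a := by
  rcases eq_zero_or_neZero μ with rfl | _
  · simp only [integral_zero_measure]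
    positivity
  have hm : 0 < μ.real Set.univ := measureReal_univ_pos
  have jensen := (Real.concaveOn_rpow ha0 ha1).le_map_average
    (Real.continuous_rpow_const ha0).continuousOn isClosed_Ici (ae_of_all μ hV0) hV hVa
  rw [average_eq, average_eq, smul_eq_mul, smul_eq_mul, inv_mul_le_iff₀ hm] at jensen
  refine jensen.trans_eq ?_
  rw [Real.mul_rpow (by positivity) (integral_nonneg hV0), Real.inv_rpow hm.le,
    Real.rpow_sub hm, Real.rpow_one]
  ring

/-- The function `h` is measurable and dominated by `H * V ^ a` almost everywhere: the class
`L_{V^a}`, with an explicit bound on the norm and up to null sets. -/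
structure HasRpowBound (μ : Measure X) (V : X → ℝ) (a H : ℝ) (h : X → ℝ) : Prop where
  measurable : Measurable h
  ae_abs_le : ∀ᵐ x ∂μ, |h x| ≤ H * V x ^ a

namespace HasRpowBound

variable {μ ν : Measure X} {V f h : X → ℝ} {a b F H : ℝ}

theorem one (μ : Measure X) (V : X → ℝ) : HasRpowBound μ V 0 1 fun _ => 1 :=
  ⟨measurable_const, ae_of_all _ fun x => by simp⟩

theorem mono_measure (hh : HasRpowBound μ V a H h) (hνμ : ν ≤ μ) : HasRpowBound ν V a H h :=
  ⟨hh.measurable, ae_mono hνμ hh.ae_abs_le⟩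

theorem add_measure (hμ : HasRpowBound μ V a H h) (hν : HasRpowBound ν V a H h) :
    HasRpowBound (μ + ν) V a H h :=
  ⟨hμ.measurable, ae_add_measure_iff.2 ⟨hμ.ae_abs_le, hν.ae_abs_le⟩⟩

theorem of_le_exponent (hh : HasRpowBound μ V a H h) (hV : ∀ x, 1 ≤ V x) (hab : a ≤ b)
    (hH : 0 ≤ H) : HasRpowBound μ V b H h :=
  ⟨hh.measurable, hh.ae_abs_le.mono fun x hx => hx.trans <|
    mul_le_mul_of_nonneg_left (Real.rpow_le_rpow_of_exponent_le (hV x) hab) hH⟩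

theorem mul (hV : ∀ x, 0 < V x) (hf : HasRpowBound μ V a F f) (hh : HasRpowBound μ V b H h) :
    HasRpowBound μ V (a + b) (F * H) fun x => f x * h x := by
  refine ⟨hf.measurable.mul hh.measurable, ?_⟩
  filter_upwards [hf.ae_abs_le, hh.ae_abs_le] with x hfx hhx
  rw [abs_mul, Real.rpow_add (hV x), mul_mul_mul_comm]
  exact mul_le_mul hfx hhx (abs_nonneg _) ((abs_nonneg _).trans hfx)

theorem memLp (hh : HasRpowBound μ V a H h) (hV0 : ∀ x, 0 ≤ V x) (hV : Integrable V μ)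
    (ha : 0 ≤ a) : MemLp h (ENNReal.ofReal a)⁻¹ μ := by
  have hVa := (memLp_one_iff_integrable.2 hV).norm_rpow_div (ENNReal.ofReal a)
  rw [one_div, ENNReal.toReal_ofReal ha] at hVa
  refine hVa.of_le_mul hh.measurable.aestronglyMeasurable (c := H) ?_
  filter_upwards [hh.ae_abs_le] with x hx
  rwa [Real.norm_of_nonneg (hV0 x), Real.norm_of_nonneg (Real.rpow_nonneg (hV0 x) a),
    Real.norm_eq_abs]

theorem integrable [IsFiniteMeasure μ] (hh : HasRpowBound μ V a H h) (hV0 : ∀ x, 0 ≤ V x)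
    (hV : Integrable V μ) (ha0 : 0 ≤ a) (ha1 : a ≤ 1) : Integrable h μ :=
  (hh.memLp hV0 hV ha0).integrable (ENNReal.one_le_inv.2 (ENNReal.ofReal_le_one.2 ha1))

theorem integral_abs_le [IsFiniteMeasure μ] (hh : HasRpowBound μ V a H h) (hV : Measurable V)
    (hV0 : ∀ x, 0 ≤ V x) (hVint : Integrable V μ) (ha0 : 0 ≤ a) (ha1 : a ≤ 1) (hH : 0 ≤ H) :
    ∫ x, |h x| ∂μ ≤ H * (μ.real Set.univ ^ (1 - a) * (∫ x, V x ∂μ) ^ a) := by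
  have hrefl : HasRpowBound μ V a 1 fun x => V x ^ a :=
    ⟨hV.pow_const a, ae_of_all _ fun x => by
      rw [one_mul, abs_of_nonneg (Real.rpow_nonneg (hV0 x) a)]⟩
  have hVa := hrefl.integrable hV0 hVint ha0 ha1
  calc ∫ x, |h x| ∂μ ≤ ∫ x, H * V x ^ a ∂μ :=
        integral_mono_ae (hh.integrable hV0 hVint ha0 ha1).abs (hVa.const_mul H) hh.ae_abs_le
    _ = H * ∫ x, V x ^ a ∂μ := integral_const_mul ..
    _ ≤ _ := by gcongr; exact integral_rpow_le hV0 hVint ha0 ha1 hVa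

end HasRpowBound

theorem add_sub_eq_add_sub_measure (μ ν : Measure X) [IsFiniteMeasure μ] [IsFiniteMeasure ν] :
    μ + (ν - μ) = ν + (μ - ν) := by
  rw [← Measure.toSignedMeasure_eq_toSignedMeasure_iff, Measure.toSignedMeasure_add,
    Measure.toSignedMeasure_add, add_comm ν.toSignedMeasure, ← sub_eq_sub_iff_add_eq_add,
    Measure.sub_toSignedMeasure_eq_toSignedMeasure_sub]

theorem integral_sub_integral_eq {μ ν : Measure X} [IsFiniteMeasure μ] [IsFiniteMeasure ν]
    {f : X → ℝ} (hμ : Integrable f μ) (hν : Integrable f ν) :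
    ∫ x, f x ∂μ - ∫ x, f x ∂ν = ∫ x, f x ∂(μ - ν) - ∫ x, f x ∂(ν - μ) := by
  rw [sub_eq_sub_iff_add_eq_add, ← integral_add_measure hμ (hν.mono_measure Measure.sub_le),
    ← integral_add_measure (hμ.mono_measure Measure.sub_le) hν, add_sub_eq_add_sub_measure,
    add_comm]

theorem HasRpowBound.abs_integral_sub_integral_le {μ ν : Measure X} [IsProbabilityMeasure μ]
    [IsProbabilityMeasure ν] {V f : X → ℝ} {a H : ℝ} (hμ : HasRpowBound μ V a H f)
    (hν : HasRpowBound ν V a H f) (hV : Measurable V) (hV0 : ∀ x, 0 ≤ V x)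
    (hVμ : Integrable V μ) (hVν : Integrable V ν) (ha0 : 0 ≤ a) (ha1 : a ≤ 1) (hH : 0 ≤ H) :
    |∫ x, f x ∂μ - ∫ x, f x ∂ν| ≤ 2 * H * (wTV V μ ν / 2) ^ a := by
  have hVsub := hVμ.mono_measure (Measure.sub_le (ν := ν))
  have hVsub' := hVν.mono_measure (Measure.sub_le (ν := μ))
  have hf := (hμ.mono_measure (Measure.sub_le (ν := ν))).add_measure
    (hν.mono_measure (Measure.sub_le (ν := μ)))
  have hVτ : Integrable V (μ - ν + (ν - μ)) := hVsub.add_measure hVsub'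
  have hfint := integrable_add_measure.1 (hf.integrable hV0 hVτ ha0 ha1).abs
  have hwTV : ∫ x, V x ∂(μ - ν + (ν - μ)) = wTV V μ ν := integral_add_measure hVsub hVsub'
  have hwTV0 : 0 ≤ wTV V μ ν := hwTV ▸ integral_nonneg hV0
  have hmass : (μ - ν + (ν - μ)).real Set.univ ≤ 2 := by
    have hle (μ ν : Measure X) [IsProbabilityMeasure μ] : (μ - ν).real Set.univ ≤ 1 :=
      (ENNReal.toReal_mono (measure_ne_top μ _) (Measure.sub_le _)).trans measureReal_le_one
    rw [measureReal_add_apply, ← one_add_one_eq_two]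
    exact add_le_add (hle μ ν) (hle ν μ)
  calc |∫ x, f x ∂μ - ∫ x, f x ∂ν|
      = |∫ x, f x ∂(μ - ν) - ∫ x, f x ∂(ν - μ)| := by
        rw [integral_sub_integral_eq (hμ.integrable hV0 hVμ ha0 ha1)
          (hν.integrable hV0 hVν ha0 ha1)]
    _ ≤ ∫ x, |f x| ∂(μ - ν) + ∫ x, |f x| ∂(ν - μ) :=
        (abs_sub _ _).trans (add_le_add abs_integral_le_integral_abs abs_integral_le_integral_abs)
    _ = ∫ x, |f x| ∂(μ - ν + (ν - μ)) := (integral_add_measure hfint.1 hfint.2).symm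
    _ ≤ H * (2 ^ (1 - a) * wTV V μ ν ^ a) := by
        refine (hf.integral_abs_le hV hV0 hVτ ha0 ha1 hH).trans ?_
        rw [hwTV]
        gcongr
    _ = 2 * H * (wTV V μ ν / 2) ^ a := by
        rw [Real.rpow_sub two_pos, Real.rpow_one, Real.div_rpow hwTV0 two_pos.le]
        ring

end RpowBound

section Ergodicity

variable {X : Type*} [MeasurableSpace X] {Q : Kernel X X} {π : Measure X} {V : X → ℝ} {c ρ : ℝ}

/-- `V`-uniform geometric ergodicity of `Q` with invariant measure `π`, rate `ρ` and constant
`c`: the `V`-weighted total variation bound for the chains started at a point. -/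
structure IsGeometricallyErgodic (Q : Kernel X X) (π : Measure X) (V : X → ℝ) (c ρ : ℝ) :
    Prop where
  measurable : Measurable V
  exp_one_le : ∀ x, Real.exp 1 ≤ V x
  invariant : Kernel.Invariant Q π
  integrable : Integrable V π
  one_le : 1 ≤ c
  pos : 0 < ρ
  lt_one : ρ < 1
  wTV_le : ∀ x k, wTV V (kIter Q k x) π ≤ c * (V x + ∫ y, V y ∂π) * ρ ^ k

/-- The function `Q ^ d h - π(h)`. -/
def centeredIter (Q : Kernel X X) (π : Measure X) (d : ℕ) (h : X → ℝ) (x : X) : ℝ :=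
  ∫ y, h y ∂(kIter Q d x) - ∫ y, h y ∂π

namespace IsGeometricallyErgodic

theorem of_wTV_bind_le (hV : Measurable V) (hVe : ∀ x, Real.exp 1 ≤ V x)
    (hinv : Kernel.Invariant Q π) (hVint : Integrable V π) (hc : 1 ≤ c) (hρ0 : 0 < ρ) (hρ1 : ρ < 1)
    (h : ∀ ξ : Measure X, IsProbabilityMeasure ξ → Integrable V ξ → ∀ k,
      wTV V (ξ.bind (kIter Q k)) π ≤ c * (∫ x, V x ∂ξ + ∫ x, V x ∂π) * ρ ^ k) :
    IsGeometricallyErgodic Q π V c ρ := by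
  refine ⟨hV, hVe, hinv, hVint, hc, hρ0, hρ1, fun x k => ?_⟩
  have hx := h (Measure.dirac x) inferInstance
    (integrable_dirac' hV.stronglyMeasurable enorm_lt_top) k
  rwa [Measure.dirac_bind (kIter Q k).measurable, integral_dirac' _ _ hV.stronglyMeasurable] at hx

variable (hQ : IsGeometricallyErgodic Q π V c ρ)
include hQ

theorem weight_pos (x : X) : 0 < V x := (Real.exp_pos 1).trans_le (hQ.exp_one_le x)

theorem one_le_weight (x : X) : 1 ≤ V x :=
  (Real.one_le_exp zero_le_one).trans (hQ.exp_one_le x)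

theorem log_one_div_pos : 0 < Real.log (1 / ρ) :=
  Real.log_pos (one_lt_one_div hQ.pos hQ.lt_one)

theorem exp_one_le_integral [IsProbabilityMeasure π] : Real.exp 1 ≤ ∫ x, V x ∂π := by
  simpa using integral_mono (integrable_const _) hQ.integrable hQ.exp_one_le

theorem integral_pos [IsProbabilityMeasure π] : 0 < ∫ x, V x ∂π :=
  (Real.exp_pos 1).trans_le hQ.exp_one_le_integral

theorem half_wTV_le [IsProbabilityMeasure π] (x : X) (k : ℕ) :
    wTV V (kIter Q k x) π / 2 ≤ c * (∫ y, V y ∂π) / Real.exp 1 * ρ ^ k * V x := by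
  have he := Real.exp_pos 1
  have hV := hQ.exp_one_le x
  have hπ := hQ.exp_one_le_integral
  have hc := zero_le_one.trans hQ.one_le
  have hρ := pow_pos hQ.pos k
  have hsum : (V x + ∫ y, V y ∂π) / 2 ≤ (∫ y, V y ∂π) * V x / Real.exp 1 := by
    rw [div_le_div_iff₀ two_pos he]
    nlinarith [mul_le_mul_of_nonneg_right hV hQ.integral_pos.le,
      mul_le_mul_of_nonneg_right hπ (hQ.weight_pos x).le]
  calc wTV V (kIter Q k x) π / 2 ≤ c * ((V x + ∫ y, V y ∂π) / 2) * ρ ^ k := by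
        linarith [hQ.wTV_le x k]
    _ ≤ c * ((∫ y, V y ∂π) * V x / Real.exp 1) * ρ ^ k := by gcongr
    _ = c * (∫ y, V y ∂π) / Real.exp 1 * ρ ^ k * V x := by ring

theorem hasRpowBound_centeredIter [IsMarkovKernel Q] [IsProbabilityMeasure π] (d : ℕ) {a H : ℝ}
    {h : X → ℝ} (hh : HasRpowBound π V a H h) (ha0 : 0 ≤ a) (ha1 : a ≤ 1) (hH : 0 ≤ H) :
    HasRpowBound π V a (H * (2 * c * (∫ x, V x ∂π) / Real.exp 1) * (ρ ^ a) ^ d)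
      (centeredIter Q π d h) := by
  have hV0 x := (hQ.weight_pos x).le
  have hρ := hQ.pos.le
  have hc := zero_le_one.trans hQ.one_le
  have hπV := hQ.integral_pos
  have hinv : kIter Q d ∘ₘ π = π := invariant_kIter hQ.invariant d
  have hβ : 1 ≤ c * (∫ x, V x ∂π) / Real.exp 1 := by
    rw [mul_div_assoc]
    exact one_le_mul_of_one_le_of_one_le hQ.one_le
      ((one_le_div (Real.exp_pos 1)).2 hQ.exp_one_le_integral)
  refine ⟨hh.measurable.stronglyMeasurable.integral_kernel.measurable.sub_const _, ?_⟩
  filter_upwards [Measure.ae_integrable_of_integrable_comp (hinv.symm ▸ hQ.integrable),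
    Measure.ae_ae_of_ae_comp (hinv.symm ▸ hh.ae_abs_le)] with x hVx hhx
  have hx : HasRpowBound (kIter Q d x) V a H h := ⟨hh.measurable, hhx⟩
  have hwTV : 0 ≤ wTV V (kIter Q d x) π / 2 :=
    div_nonneg (add_nonneg (integral_nonneg hV0) (integral_nonneg hV0)) two_pos.le
  calc |centeredIter Q π d h x| ≤ 2 * H * (wTV V (kIter Q d x) π / 2) ^ a :=
        hx.abs_integral_sub_integral_le hh hQ.measurable hV0 hVx hQ.integrable ha0 ha1 hH
    _ ≤ 2 * H * (c * (∫ y, V y ∂π) / Real.exp 1 * ρ ^ d * V x) ^ a := by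
        gcongr
        exact hQ.half_wTV_le x d
    _ = 2 * H * ((c * (∫ y, V y ∂π) / Real.exp 1) ^ a * (ρ ^ a) ^ d * V x ^ a) := by
        rw [Real.mul_rpow (by positivity) (hV0 x), Real.mul_rpow (by positivity) (by positivity),
          Real.rpow_pow_comm hρ]
    _ ≤ 2 * H * (c * (∫ y, V y ∂π) / Real.exp 1 * (ρ ^ a) ^ d * V x ^ a) := by
        have := hV0 x
        gcongr
        exact Real.rpow_le_self_of_one_le hβ ha1
    _ = _ := by ring

theorem hasRpowBound_centeredIter_of_le [IsMarkovKernel Q] [IsProbabilityMeasure π] (d : ℕ)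
    {a b H : ℝ} {h : X → ℝ} (hh : HasRpowBound π V a H h) (hb : 0 ≤ b) (hba : b ≤ a) (ha1 : a ≤ 1)
    (hH : 0 ≤ H) :
    HasRpowBound π V a (H * (2 * c * (∫ x, V x ∂π) / Real.exp 1) * (ρ ^ b) ^ d)
      (centeredIter Q π d h) := by
  have hbound := hQ.hasRpowBound_centeredIter d hh (hb.trans hba) ha1 hH
  have hρ := hQ.pos.le
  have hc := zero_le_one.trans hQ.one_le
  have hπV := hQ.integral_pos
  refine ⟨hbound.measurable, hbound.ae_abs_le.mono fun x hx => hx.trans ?_⟩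
  gcongr _ * ?_ ^ d * _
  · exact Real.rpow_nonneg (hQ.weight_pos x).le a
  · exact Real.rpow_le_rpow_of_exponent_ge hQ.pos hQ.lt_one.le hba

end IsGeometricallyErgodic

end Ergodicity

/-! ### Joint cumulants of a geometrically ergodic chain -/

section MarkovCumulants

variable {X Ω : Type*} [MeasurableSpace X] [MeasurableSpace Ω] {Q : Kernel X X} [IsMarkovKernel Q]
  {π : Measure X} {P : Measure Ω} [IsProbabilityMeasure P]
  {V : X → ℝ} {c ρ : ℝ} {Xs : ℕ → Ω → X} {g h : X → ℝ} {a b H N : ℝ} {s : Multiset ℕ}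

theorem abs_tiltedMean_apply_cons_le {Y : ℕ → Ω → ℝ} {Z : Ω → ℝ} {B θ C C' : ℝ} {i t : ℕ}
    (hB : 0 ≤ B) (h0 : 0 ≤ θ) (h1 : θ ≤ 1) (hC : 0 ≤ C) (hC' : 0 ≤ C')
    (hmean : ∫ ω, Y i ω ∂P = 0)
    (hY : ∀ r ≤ s, |tiltedMean P Y (Y i) r| ≤ C * MultisetSeries.mixingWeight B θ t r)
    (hZ : ∀ r ≤ s, |tiltedMean P Y Z r| ≤ C' * MultisetSeries.mixingWeight B θ t r)
    (hYZ : |tiltedMean P Y (fun ω => Y i ω * Z ω) s| ≤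
      C * C' * MultisetSeries.mixingWeight B θ t s) :
    |tiltedMean P Y Z (i ::ₘ s)| ≤
      C * C' * ((s.card + 1) * MultisetSeries.mixingWeight B θ t s) := by
  rw [← MultisetSeries.pderiv_apply i (tiltedMean P Y Z), pderiv_tiltedMean,
    MultisetSeries.sub_apply, mul_comm (tiltedMean P Y Z)]
  have hprod := MultisetSeries.abs_mul_apply_le hB h0 h1 hC hC'
    ((tiltedMean_apply_zero _).trans hmean) hY hZ
  linarith [abs_sub (tiltedMean P Y (fun ω => Y i ω * Z ω) s)
    ((tiltedMean P Y (Y i) * tiltedMean P Y Z) s)]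

namespace IsGeometricallyErgodic

variable (hQ : IsGeometricallyErgodic Q π V c ρ) (hX : IsMarkovChain P Xs π Q)
include hQ hX

theorem integral_comp_chain (hh : Measurable h) (t : ℕ) :
    ∫ ω, h (Xs t ω) ∂P = ∫ x, h x ∂π := by
  rw [← hX.map_eq hQ.invariant t,
    integral_map (hX.meas t).aemeasurable hh.aestronglyMeasurable]

theorem memLp_comp_chain (hh : HasRpowBound π V a H h) (ha : 0 ≤ a) (t : ℕ) :
    MemLp (fun ω => h (Xs t ω)) (ENNReal.ofReal a)⁻¹ P :=
  (hh.memLp (fun x => (hQ.weight_pos x).le) hQ.integrable ha).comp_measurePreserving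
    ⟨hX.meas t, hX.map_eq hQ.invariant t⟩

theorem integrable_prod_chain_mul (hg : HasRpowBound π V b N g) (hb : 0 ≤ b)
    (hh : HasRpowBound π V a H h) (ha : 0 ≤ a) (hs : s.card * b + a ≤ 1) (t : ℕ) :
    Integrable (fun ω => (s.map fun i => g (Xs i ω)).prod * h (Xs t ω)) P := by
  refine integrable_multiset_prod_mul (hQ.memLp_comp_chain hX hg hb)
    (hQ.memLp_comp_chain hX hh ha t) ?_
  rw [← ENNReal.ofReal_natCast, ← ENNReal.ofReal_mul (Nat.cast_nonneg _),
    ← ENNReal.ofReal_add (by positivity) ha]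
  exact ENNReal.ofReal_le_one.2 hs

theorem integrable_prod_chain (hg : HasRpowBound π V b N g) (hb : 0 ≤ b) (hs : s.card * b ≤ 1) :
    Integrable (fun ω => (s.map fun i => g (Xs i ω)).prod) P := by
  simpa only [mul_one] using hQ.integrable_prod_chain_mul hX hg hb
    (.one π V) le_rfl ((add_zero _).trans_le hs) 0

variable [IsProbabilityMeasure π]

theorem abs_integral_comp_chain_le (hh : HasRpowBound π V a H h) (ha0 : 0 ≤ a) (ha1 : a ≤ 1)
    (hH : 0 ≤ H) (t : ℕ) : |∫ ω, h (Xs t ω) ∂P| ≤ H * (∫ x, V x ∂π) ^ a := by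
  have hmean := hh.integral_abs_le hQ.measurable (fun x => (hQ.weight_pos x).le)
    hQ.integrable ha0 ha1 hH
  rw [probReal_univ, Real.one_rpow, one_mul] at hmean
  rw [hQ.integral_comp_chain hX hh.measurable]
  exact abs_integral_le_integral_abs.trans hmean

theorem jointMoment_comp_add (hg : HasRpowBound π V b N g) (hb : 0 ≤ b)
    (hh : HasRpowBound π V a H h) (ha : 0 ≤ a) (hH : 0 ≤ H) (hs : s.card * b + a ≤ 1) {j : ℕ}
    (hsj : ∀ i ∈ s, i ≤ j) (d : ℕ) :
    jointMoment P (fun i ω => g (Xs i ω)) (fun ω => h (Xs (j + d) ω)) s =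
      jointMoment P (fun i ω => g (Xs i ω)) (fun ω => centeredIter Q π d h (Xs j ω)) s +
        (∫ x, h x ∂π) * jointMoment P (fun i ω => g (Xs i ω)) (fun _ => 1) s := by
  have ha1 : a ≤ 1 := by linarith [mul_nonneg (Nat.cast_nonneg (α := ℝ) s.card) hb]
  have hprod : StronglyMeasurable[past Xs j] fun ω => (s.map fun i => g (Xs i ω)).prod := by
    have hfactor : ∀ f ∈ s.map fun i ω => g (Xs i ω), StronglyMeasurable[past Xs j] f := by
      simp only [Multiset.mem_map, forall_exists_index, and_imp, forall_apply_eq_imp_iff₂]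
      exact fun i hi => (hg.measurable.comp (measurable_past (hsj i hi))).stronglyMeasurable
    simpa only [Multiset.map_map, Function.comp_def] using
      Multiset.stronglyMeasurable_fun_prod _ hfactor
  have hint := hQ.integrable_prod_chain_mul hX hg hb
    (hQ.hasRpowBound_centeredIter d hh ha ha1 hH) ha hs j
  have hint' := hQ.integrable_prod_chain_mul hX hg hb (.one π V) le_rfl (s := s) (by linarith) j
  simp only [jointMoment_apply]
  rw [hX.integral_mul_comp_add d j hprod hh.measurable
      ((hQ.memLp_comp_chain hX hh ha _).integrable
        (ENNReal.one_le_inv.2 (ENNReal.ofReal_le_one.2 ha1)))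
      (hQ.integrable_prod_chain_mul hX hg hb hh ha hs _),
    ← integral_const_mul, ← integral_add hint (hint'.const_mul _)]
  simp only [centeredIter]
  congr 1 with ω
  ring

theorem tiltedMean_comp_add (hg : HasRpowBound π V b N g) (hb : 0 ≤ b)
    (hh : HasRpowBound π V a H h) (ha : 0 ≤ a) (hH : 0 ≤ H) (hs : s.card * b + a ≤ 1)
    (hs0 : s ≠ 0) {j : ℕ} (hsj : ∀ i ∈ s, i ≤ j) (d : ℕ) :
    tiltedMean P (fun i ω => g (Xs i ω)) (fun ω => h (Xs (j + d) ω)) s =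
      tiltedMean P (fun i ω => g (Xs i ω)) (fun ω => centeredIter Q π d h (Xs j ω)) s := by
  refine tiltedMean_apply_congr_add_const (c := ∫ x, h x ∂π) hs0 fun t ht => ?_
  refine hQ.jointMoment_comp_add hX hg hb hh ha hH (le_trans ?_ hs)
    (fun i hi => hsj i (Multiset.mem_of_le ht hi)) d
  gcongr

theorem abs_tiltedMean_cons_le (hg : HasRpowBound π V b N g) (hb : 0 < b) (hN : 0 ≤ N)
    (hgπ : ∫ x, g x ∂π = 0) {B : ℝ}
    (hB : B = N * (2 * c * (∫ x, V x ∂π) / Real.exp 1) * (∫ x, V x ∂π) ^ b)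
    {j : ℕ} (hsj : ∀ i ∈ s, i ≤ j)
    (ih : ∀ u ≤ s, ∀ {a H : ℝ} {h : X → ℝ}, b ≤ a → HasRpowBound π V a H h → 0 ≤ H →
      s.card * b + a ≤ 1 → |tiltedMean P (fun i ω => g (Xs i ω)) (fun ω => h (Xs j ω)) u| ≤
        H * (∫ x, V x ∂π) ^ a * MultisetSeries.mixingWeight B (ρ ^ b) j u)
    (hba : b ≤ a) (hh : HasRpowBound π V a H h) (hH : 0 ≤ H)
    (hs : s.card * b + (b + a) ≤ 1) (d : ℕ) :
    |tiltedMean P (fun i ω => g (Xs i ω)) (fun ω => h (Xs (j + d) ω)) (j ::ₘ s)| ≤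
      H * (∫ x, V x ∂π) ^ a * MultisetSeries.mixingWeight B (ρ ^ b) (j + d) (j ::ₘ s) := by
  have hp := hQ.integral_pos
  have hc := zero_le_one.trans hQ.one_le
  have hρ := hQ.pos
  set p := ∫ x, V x ∂π
  set β := 2 * c * p / Real.exp 1
  have hB0 : 0 ≤ B := by rw [hB]; positivity
  have hθ : 0 ≤ ρ ^ b := by positivity
  have hθ1 : ρ ^ b ≤ 1 := Real.rpow_le_one hρ.le hQ.lt_one.le hb.le
  have ha : 0 ≤ a := hb.le.trans hba
  have ha1 : a ≤ 1 := by linarith [mul_nonneg (Nat.cast_nonneg (α := ℝ) s.card) hb.le]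
  have hh' := hQ.hasRpowBound_centeredIter_of_le d hh hb.le hba ha1 hH
  set H' := H * β * (ρ ^ b) ^ d with hH'_def
  have hH' : 0 ≤ H' := by positivity
  have hdiag := ih s le_rfl (by linarith) (hg.mul hQ.weight_pos hh') (mul_nonneg hN hH') hs
  rw [Real.rpow_add hp, mul_mul_mul_comm] at hdiag
  have hcard : (j ::ₘ s).card * b + a ≤ 1 := by
    rw [Multiset.card_cons]
    push_cast
    linarith
  have hmax : ∀ i ∈ j ::ₘ s, i ≤ j := Multiset.forall_mem_cons.2 ⟨le_rfl, hsj⟩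
  rw [hQ.tiltedMean_comp_add hX hg hb.le hh ha hH hcard Multiset.cons_ne_zero hmax,
    MultisetSeries.mixingWeight_cons_of_le _ _ (Nat.le_add_right j d) hsj, Nat.add_sub_cancel_left]
  refine (abs_tiltedMean_apply_cons_le hB0 hθ hθ1 (by positivity) (by positivity)
    ((hQ.integral_comp_chain hX hg.measurable j).trans hgπ)
    (fun u hu => ih u hu le_rfl hg hN (by linarith))
    (fun u hu => ih u hu hba hh' hH' (by linarith)) hdiag).trans_eq ?_
  rw [hH'_def, hB]
  ring

theorem abs_tiltedMean_le (hg : HasRpowBound π V b N g) (hb : 0 < b) (hN : 0 ≤ N)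
    (hgπ : ∫ x, g x ∂π = 0) (hba : b ≤ a) (hh : HasRpowBound π V a H h) (hH : 0 ≤ H)
    (hs : s.card * b + a ≤ 1) {t : ℕ} (hst : ∀ i ∈ s, i ≤ t) :
    |tiltedMean P (fun i ω => g (Xs i ω)) (fun ω => h (Xs t ω)) s| ≤
      H * (∫ x, V x ∂π) ^ a * MultisetSeries.mixingWeight
        (N * (2 * c * (∫ x, V x ∂π) / Real.exp 1) * (∫ x, V x ∂π) ^ b) (ρ ^ b) t s := by
  induction s using Multiset.strongInductionOn generalizing t a H h with | _ s ih =>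
  rcases eq_or_ne s 0 with rfl | hs0
  · rw [Multiset.card_zero, Nat.cast_zero, zero_mul, zero_add] at hs
    rw [tiltedMean_apply_zero, MultisetSeries.mixingWeight_zero, mul_one]
    exact hQ.abs_integral_comp_chain_le hX hh (hb.le.trans hba) hs hH t
  obtain ⟨j, hj, hmax : ∀ i ∈ s, i ≤ j⟩ := s.exists_max_image id hs0
  obtain ⟨r, rfl⟩ := Multiset.exists_cons_of_mem hj
  obtain ⟨d, rfl⟩ := Nat.exists_eq_add_of_le (hst j hj)
  have hrj : ∀ i ∈ r, i ≤ j := fun i hi => hmax i (Multiset.mem_cons_of_mem hi)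
  have hr : r.card * b + (b + a) ≤ 1 := by
    rw [Multiset.card_cons] at hs
    push_cast at hs
    linarith
  refine hQ.abs_tiltedMean_cons_le hX hg hb hN hgπ rfl hrj ?_ hba hh hH hr d
  intro u hu a H h hba hh hH ha
  have hcard : u.card * b ≤ r.card * b := by gcongr
  exact ih u (hu.trans_lt (Multiset.lt_cons_self r j)) hba hh hH (by linarith)
    fun i hi => hrj i (Multiset.mem_of_le hu hi)

end IsGeometricallyErgodic

end MarkovCumulants

/-! ### The Rosenthal inequality -/

section Rosenthal

theorem inv_one_sub_exp_neg_le {x : ℝ} (hx : 0 < x) :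
    (1 - Real.exp (-x))⁻¹ ≤ Real.exp (x / 2) / x := by
  have hsinh := Real.self_le_sinh_iff.2 (half_pos hx).le
  have hfactor : Real.exp (x / 2) * (1 - Real.exp (-x)) = 2 * Real.sinh (x / 2) := by
    rw [Real.sinh_eq, mul_sub, mul_one, ← Real.exp_add, show x / 2 + -x = -(x / 2) by ring]
    ring
  have hpos : 0 < 1 - Real.exp (-x) := sub_pos.2 (Real.exp_lt_one_iff.2 (neg_lt_zero.2 hx))
  rw [inv_le_iff_one_le_mul₀ hpos, div_mul_eq_mul_div, hfactor, one_le_div hx]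
  linarith

theorem inv_one_sub_rpow_pow_le {ρ : ℝ} (h0 : 0 < ρ) (h1 : ρ < 1) (k : ℕ) :
    (1 - ρ ^ (1 / ((k + 1 : ℕ) : ℝ)))⁻¹ ^ k ≤
      (√ρ)⁻¹ * (((k + 1 : ℕ) : ℝ) / Real.log (1 / ρ)) ^ k := by
  have hL : 0 < Real.log (1 / ρ) := Real.log_pos (one_lt_one_div h0 h1)
  set L := Real.log (1 / ρ) with hLdef
  have hlog : Real.log ρ = -L := by rw [hLdef, one_div, Real.log_inv, neg_neg]
  have hx : 0 < L / (k + 1 : ℕ) := by positivity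
  have hsqrt : Real.exp (L / 2) = (√ρ)⁻¹ := by
    rw [Real.exp_half, Real.exp_log (by positivity), one_div, Real.sqrt_inv]
  have hθ : ρ ^ (1 / ((k + 1 : ℕ) : ℝ)) = Real.exp (-(L / (k + 1 : ℕ))) := by
    rw [Real.rpow_def_of_pos h0, hlog, mul_one_div, neg_div]
  rw [hθ]
  calc (1 - Real.exp (-(L / (k + 1 : ℕ))))⁻¹ ^ k
      ≤ (Real.exp (L / (k + 1 : ℕ) / 2) / (L / (k + 1 : ℕ))) ^ k :=
        pow_le_pow_left₀ (inv_nonneg.2 (sub_nonneg.2 (Real.exp_le_one_iff.2 (neg_nonpos.2 hx.le))))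
          (inv_one_sub_exp_neg_le hx) k
    _ = Real.exp (k * (L / (k + 1 : ℕ) / 2)) * (((k + 1 : ℕ) : ℝ) / L) ^ k := by
        rw [div_eq_mul_inv, inv_div, mul_pow, Real.exp_nat_mul]
    _ ≤ (√ρ)⁻¹ * (((k + 1 : ℕ) : ℝ) / L) ^ k := by
        rw [← hsqrt]
        refine mul_le_mul_of_nonneg_right (Real.exp_le_exp.2 ?_) (by positivity)
        rw [show k * (L / (k + 1 : ℕ) / 2) = L / 2 * (k / (k + 1 : ℕ)) by ring]
        exact mul_le_of_le_one_right (by positivity)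
          (div_le_one_of_le₀ (Nat.cast_le.2 k.le_succ) (by positivity))

theorem succ_div_exp_one_pow_le (k : ℕ) :
    (((k + 1 : ℕ) : ℝ) / Real.exp 1) ^ k ≤ Real.exp 1 * k.factorial := by
  have h := Real.pow_div_factorial_le_exp ((k + 1 : ℕ) : ℝ) (Nat.cast_nonneg _) (k + 1)
  rw [div_le_iff₀ (by positivity), ← Real.exp_one_pow, pow_succ', Nat.factorial_succ, Nat.cast_mul,
    mul_left_comm] at h
  rw [div_pow, div_le_iff₀ (by positivity)]
  calc ((k + 1 : ℕ) : ℝ) ^ k ≤ Real.exp 1 ^ (k + 1) * k.factorial :=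
        le_of_mul_le_mul_left h (by positivity)
    _ = Real.exp 1 * k.factorial * Real.exp 1 ^ k := by ring

variable {X Ω : Type*} [MeasurableSpace X] [MeasurableSpace Ω] {Q : Kernel X X} [IsMarkovKernel Q]
  {π : Measure X} [IsProbabilityMeasure π] {P : Measure Ω} [IsProbabilityMeasure P]
  {V : X → ℝ} {c ρ : ℝ} {Xs : ℕ → Ω → X} {g : X → ℝ} {N : ℝ} {κ : MultisetSeries ℕ ℝ}

namespace IsGeometricallyErgodic

variable (hQ : IsGeometricallyErgodic Q π V c ρ)
include hQ

variable (hX : IsMarkovChain P Xs π Q)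
  (hκ : ∀ i, MultisetSeries.pderiv i κ = tiltedMean P (fun i ω => g (Xs i ω)) fun ω => g (Xs i ω))
include hX hκ

theorem abs_cumulant_cons_le {i : ℕ} {s : Multiset ℕ}
    (hg : HasRpowBound π V (1 / ((s.card + 1 : ℕ) : ℝ)) N g) (hN : 0 ≤ N) (hgπ : ∫ x, g x ∂π = 0)
    (hs : ∀ j ∈ s, j ≤ i) :
    |κ (i ::ₘ s)| ≤ N * (∫ x, V x ∂π) *
      (s.card.factorial * (N * (2 * c * (∫ x, V x ∂π) / Real.exp 1)) ^ s.card) *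
      MultisetSeries.powDepth (ρ ^ (1 / ((s.card + 1 : ℕ) : ℝ))) i s := by
  have hsum : s.card * (1 / ((s.card + 1 : ℕ) : ℝ)) + 1 / ((s.card + 1 : ℕ) : ℝ) = 1 := by
    field_simp
    push_cast
    ring
  have hb : 0 < 1 / ((s.card + 1 : ℕ) : ℝ) := by positivity
  have h := hQ.abs_tiltedMean_le hX hg hb hN hgπ le_rfl hg hN hsum.le hs
  rw [← hκ, MultisetSeries.pderiv_apply, MultisetSeries.mixingWeight] at h
  set b := 1 / ((s.card + 1 : ℕ) : ℝ)
  have hp := hQ.integral_pos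
  set p := ∫ x, V x ∂π
  refine h.trans_eq ?_
  have hrpow : (p ^ b) ^ s.card * p ^ b = p := by
    rw [← Real.rpow_mul_natCast hp.le, ← Real.rpow_add hp, mul_comm b, hsum, Real.rpow_one]
  rw [mul_pow (N * _) (p ^ b)]
  linear_combination (N * (s.card.factorial * (N * (2 * c * p / Real.exp 1)) ^ s.card) *
    MultisetSeries.powDepth (ρ ^ b) i s) * hrpow

theorem abs_sumCumulant_range_succ_le {k : ℕ}
    (hg : HasRpowBound π V (1 / ((k + 1 : ℕ) : ℝ)) N g) (hN : 0 ≤ N) (hgπ : ∫ x, g x ∂π = 0)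
    (n : ℕ) :
    |sumCumulant κ (range n) (k + 1)| ≤ n * ((k + 1).factorial * (Real.exp 1 * k.factorial ^ 2 *
      (N * (∫ x, V x ∂π) * (√ρ)⁻¹ * (2 * c * (∫ x, V x ∂π) * N / Real.log (1 / ρ)) ^ k))) := by
  have hp := hQ.integral_pos
  have hc := zero_le_one.trans hQ.one_le
  have hρ := hQ.pos
  have hL := hQ.log_one_div_pos
  set p := ∫ x, V x ∂π
  set L := Real.log (1 / ρ)
  have hθ : ρ ^ (1 / ((k + 1 : ℕ) : ℝ)) < 1 := Real.rpow_lt_one hρ.le hQ.lt_one (by positivity)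
  have hC : 0 ≤ N * p * (k.factorial * (N * (2 * c * p / Real.exp 1)) ^ k) := by positivity
  refine (MultisetSeries.abs_iterate_sumPDeriv_range_le (by positivity) hθ hC ?_).trans ?_
  · rintro i s rfl hs
    exact hQ.abs_cumulant_cons_le hX hκ hg hN hgπ hs
  gcongr n * ((k + 1).factorial * ?_)
  calc N * p * (k.factorial * (N * (2 * c * p / Real.exp 1)) ^ k) *
        (1 - ρ ^ (1 / ((k + 1 : ℕ) : ℝ)))⁻¹ ^ k
      ≤ N * p * (k.factorial * (N * (2 * c * p / Real.exp 1)) ^ k) *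
        ((√ρ)⁻¹ * (((k + 1 : ℕ) : ℝ) / L) ^ k) := by
        gcongr
        exact inv_one_sub_rpow_pow_le hρ hQ.lt_one k
    _ = k.factorial * (((k + 1 : ℕ) : ℝ) / Real.exp 1) ^ k *
        (N * p * (√ρ)⁻¹ * (2 * c * p * N / L) ^ k) := by
        simp only [mul_pow, div_pow]
        ring
    _ ≤ k.factorial * (Real.exp 1 * k.factorial) *
        (N * p * (√ρ)⁻¹ * (2 * c * p * N / L) ^ k) := by
        gcongr
        exact succ_div_exp_one_pow_le k
    _ = _ := by ring

theorem abs_sumCumulant_range_div_factorial_le {k : ℕ} (hk : 2 ≤ k)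
    (hg : HasRpowBound π V (1 / (k : ℝ)) N g) (hN : 0 ≤ N) (hgπ : ∫ x, g x ∂π = 0) (n : ℕ) :
    |sumCumulant κ (range n) k / k.factorial| ≤ (k.factorial : ℝ) ^ 2 *
      (n * (√ρ)⁻¹ * Real.log (1 / ρ) * (2 * c * (∫ x, V x ∂π) * N / Real.log (1 / ρ)) ^ k) := by
  obtain ⟨k, rfl⟩ : ∃ j, k = j + 1 := ⟨k - 1, by omega⟩
  have hp := hQ.integral_pos
  have hc := hQ.one_le
  have hρ := hQ.pos
  have hL := hQ.log_one_div_pos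
  have hcum := hQ.abs_sumCumulant_range_succ_le hX hκ hg hN hgπ n
  set p := ∫ x, V x ∂π
  set L := Real.log (1 / ρ)
  have hfact : Real.exp 1 * k.factorial ^ 2 ≤ ((k + 1).factorial : ℝ) ^ 2 * 2 := by
    have hk1 : (2 : ℝ) ≤ k + 1 := by exact_mod_cast hk
    rw [Nat.factorial_succ, Nat.cast_mul, mul_pow, mul_right_comm]
    push_cast
    gcongr
    nlinarith [Real.exp_one_lt_three]
  rw [abs_div, Nat.abs_cast, div_le_iff₀' (by positivity)]
  calc _ ≤ _ := hcum
    _ ≤ n * ((k + 1).factorial * (((k + 1).factorial : ℝ) ^ 2 * 2 *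
        (N * (c * p) * (√ρ)⁻¹ * (2 * c * p * N / L) ^ k))) := by
        gcongr
        exact le_mul_of_one_le_left hp.le hc
    _ = _ := by
        rw [pow_succ _ k]
        field_simp

end IsGeometricallyErgodic

end Rosenthal

section Assembly

theorem Bcoef_zero (u q : ℕ) :
    Bcoef 0 u q = ((2 * q).factorial : ℝ) / (u.factorial : ℝ) *
      ∑ k ∈ blockSizes u (2 * q), ∏ i, ((k i : ℕ).factorial : ℝ) ^ 2 := by
  simp only [Bcoef, blockSizes, zero_add, Real.rpow_two]

theorem sum_blockSizes_prod_le {x y : ℕ → ℝ} {A D : ℝ} {u L : ℕ} (hx : ∀ k, 0 ≤ x k)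
    (hxy : ∀ k, 2 ≤ k → k ≤ L → x k ≤ y k * (A * D ^ k)) :
    ∑ k ∈ blockSizes u L, ∏ i, x (k i) ≤
      (∑ k ∈ blockSizes u L, ∏ i, y (k i)) * (A ^ u * D ^ L) := by
  rw [sum_mul]
  refine sum_le_sum fun k hk => ?_
  obtain ⟨hk2, hksum⟩ := mem_blockSizes.1 hk
  calc ∏ i, x (k i) ≤ ∏ i, y (k i) * (A * D ^ (k i : ℕ)) :=
        prod_le_prod (fun i _ => hx _) fun i _ => hxy _ (hk2 i) (Nat.le_of_lt_succ (k i).2)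
    _ = (∏ i, y (k i)) * (A ^ u * D ^ L) := by
        rw [prod_mul_distrib, prod_mul_distrib, prod_const, card_univ, Fintype.card_fin,
          prod_pow_eq_pow_sum, hksum]

theorem abs_le_vnorm_mul {Y : Type*} {U f : Y → ℝ} {x : Y} (hU : 0 < U x)
    (hf : BddAbove (Set.range fun x => |f x| / U x)) : |f x| ≤ vnorm U f * U x :=
  (div_le_iff₀ hU).1 (le_ciSup hf x)

theorem vnorm_nonneg {Y : Type*} {U : Y → ℝ} (hU : ∀ x, 0 ≤ U x) (f : Y → ℝ) : 0 ≤ vnorm U f :=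
  Real.iSup_nonneg fun x => div_nonneg (abs_nonneg _) (hU x)

theorem MemL.sub_const {Y : Type*} [MeasurableSpace Y] {U f : Y → ℝ} (hf : MemL U f)
    (hU : ∀ x, 1 ≤ U x) (r : ℝ) : MemL U fun x => f x - r := by
  obtain ⟨A, hA⟩ := hf.bdd
  refine ⟨hf.meas.sub_const r, A + |r|, ?_⟩
  rintro _ ⟨x, rfl⟩
  calc |f x - r| / U x ≤ |f x| / U x + |r| / U x := by
        rw [← add_div]
        exact div_le_div_of_nonneg_right (abs_sub _ _) (zero_le_one.trans (hU x))
    _ ≤ A + |r| := add_le_add (hA ⟨x, rfl⟩) (div_le_self (abs_nonneg r) (hU x))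

theorem MemL.hasRpowBound {Y : Type*} [MeasurableSpace Y] {V f : Y → ℝ} {a : ℝ}
    (hf : MemL (fun x => V x ^ a) f) (hV : ∀ x, 0 < V x) (μ : Measure Y) :
    HasRpowBound μ V a (vnorm (fun x => V x ^ a) f) f :=
  ⟨hf.meas, ae_of_all _ fun x => abs_le_vnorm_mul (Real.rpow_pos_of_pos (hV x) a) hf.bdd⟩

variable {X Ω : Type*} [MeasurableSpace X] [MeasurableSpace Ω] {Q : Kernel X X} [IsMarkovKernel Q]
  {π : Measure X} [IsProbabilityMeasure π] {P : Measure Ω} [IsProbabilityMeasure P]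
  {V : X → ℝ} {c ρ : ℝ} {Xs : ℕ → Ω → X} {g : X → ℝ} {N : ℝ} {q : ℕ}

namespace IsGeometricallyErgodic

theorem integral_sum_pow_le (hQ : IsGeometricallyErgodic Q π V c ρ) (hX : IsMarkovChain P Xs π Q)
    (hq : 1 ≤ q) (hg : HasRpowBound π V (1 / (2 * q : ℝ)) N g) (hN : 0 ≤ N)
    (hgπ : ∫ x, g x ∂π = 0) (n : ℕ) :
    ∫ ω, (∑ i ∈ range n, g (Xs i ω)) ^ (2 * q) ∂P ≤
      gaussMoment q * (∫ ω, (∑ i ∈ range n, g (Xs i ω)) ^ 2 ∂P) ^ q +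
      (2 * c * ∫ x, V x ∂π) ^ (2 * q) * N ^ (2 * q) * ∑ u ∈ Icc 1 (q - 1),
        Bcoef 0 u q * (n : ℝ) ^ u / (ρ ^ ((u : ℝ) / 2) * Real.log (1 / ρ) ^ (2 * q - u)) := by
  have hL := hQ.log_one_div_pos
  have hρ := hQ.pos
  obtain ⟨κ, hκ0, hκ⟩ := exists_cumulants P fun i ω => g (Xs i ω)
  have hint (s : Multiset ℕ) (hs : s.card ≤ 2 * q) :
      Integrable (fun ω => (s.map fun i => g (Xs i ω)).prod) P := by
    refine hQ.integrable_prod_chain hX hg (by positivity) ?_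
    rw [mul_one_div]
    exact div_le_one_of_le₀ (by exact_mod_cast hs) (by positivity)
  have hmean (i : ℕ) : ∫ ω, g (Xs i ω) ∂P = 0 :=
    (hQ.integral_comp_chain hX hg.measurable i).trans hgπ
  refine (integral_sum_pow_two_mul_le hκ0 hκ hq hint fun i _ => hmean i).trans ?_
  rw [mul_sum, mul_sum]
  refine add_le_add le_rfl (sum_le_sum fun u hu => ?_)
  have hcum (k : ℕ) (hk2 : 2 ≤ k) (hkq : k ≤ 2 * q) :=
    hQ.abs_sumCumulant_range_div_factorial_le hX hκ hk2 (hg.of_le_exponent hQ.one_le_weight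
      (one_div_le_one_div_of_le (by positivity) (by exact_mod_cast hkq)) hN) hN hgπ n
  set L := Real.log (1 / ρ)
  set C := 2 * c * ∫ x, V x ∂π
  have hpow : L ^ (2 * q) = L ^ u * L ^ (2 * q - u) := by
    rw [← pow_add]
    congr 1
    have := (mem_Icc.1 hu).2
    omega
  calc _ ≤ ((2 * q).factorial : ℝ) * ((∑ k ∈ blockSizes u (2 * q),
        ∏ i, ((k i : ℕ).factorial : ℝ) ^ 2) * ((n * (√ρ)⁻¹ * L) ^ u * (C * N / L) ^ (2 * q)) /
          u.factorial) := by
        gcongr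
        exact sum_blockSizes_prod_le (fun _ => abs_nonneg _) hcum
    _ = _ := by
        rw [Bcoef_zero, Real.rpow_div_two_eq_sqrt _ hρ.le, Real.rpow_natCast, div_pow, hpow]
        simp only [mul_pow, inv_pow]
        field_simp

end IsGeometricallyErgodic

end Assembly

theorem rosenthal_V_q_general {X Ω : Type*} [MeasurableSpace X] [MeasurableSpace Ω]
    {Q : Kernel X X} [IsMarkovKernel Q] {V : X → ℝ} {c ρ : ℝ} {piQ : Measure X}
    [IsProbabilityMeasure piQ] (hQ : IsGeometricallyErgodic Q piQ V c ρ) {q : ℕ} (hq : 1 ≤ q)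
    {g : X → ℝ} (hg : MemL (fun x => V x ^ ((1 : ℝ) / (2 * q))) g) (n : ℕ) {P : Measure Ω}
    [IsProbabilityMeasure P] {Xs : ℕ → Ω → X} (hchain : IsMarkovChain P Xs piQ Q) :
    (∫ ω, |∑ ℓ ∈ Finset.range n, (g (Xs ℓ ω) - ∫ x, g x ∂piQ)| ^ (2 * q) ∂P) ≤
      gaussMoment q *
        (∫ ω, (∑ ℓ ∈ Finset.range n, (g (Xs ℓ ω) - ∫ x, g x ∂piQ)) ^ 2 ∂P) ^ q
      + (2 * c * ∫ x, V x ∂piQ) ^ (2 * q) *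
          vnorm (fun x => V x ^ ((1 : ℝ) / (2 * q)))
            (fun x => g x - ∫ y, g y ∂piQ) ^ (2 * q) *
          ∑ u ∈ Finset.Icc 1 (q - 1),
            Bcoef 0 u q * (n : ℝ) ^ u /
              (ρ ^ ((u : ℝ) / 2) * Real.log (1 / ρ) ^ (2 * q - u)) := by
  have ha0 : 0 ≤ (1 : ℝ) / (2 * q) := by positivity
  have ha1 : (1 : ℝ) / (2 * q) ≤ 1 :=
    div_le_one_of_le₀ (by exact_mod_cast (by omega : 1 ≤ 2 * q)) (by positivity)
  have hV0 (x : X) : 0 ≤ V x := (hQ.weight_pos x).le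
  have hgπ : Integrable g piQ :=
    (hg.hasRpowBound hQ.weight_pos piQ).integrable hV0 hQ.integrable ha0 ha1
  have hcentered := (hg.sub_const (fun x => Real.one_le_rpow (hQ.one_le_weight x) ha0)
    (∫ x, g x ∂piQ)).hasRpowBound hQ.weight_pos piQ
  have hmean : ∫ x, (g x - ∫ y, g y ∂piQ) ∂piQ = 0 := by
    rw [integral_sub hgπ (integrable_const _), integral_const, probReal_univ, one_smul, sub_self]
  simp only [(even_two_mul q).pow_abs]
  exact hQ.integral_sum_pow_le hchain hq hcentered
    (vnorm_nonneg (fun x => Real.rpow_nonneg (hV0 x) _) _) hmean n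

/-- Theorem 1 (Rosenthal-type inequality, stationary chain, `L_{V^{1/(2q)}}` class). -/
theorem rosenthal_V_q
    {X : Type*} [MeasurableSpace X]
    (Q : ProbabilityTheory.Kernel X X) [ProbabilityTheory.IsMarkovKernel Q]
    (V : X → ℝ) (lam b : ℝ) (m : ℕ) (eps d c ρ : ℝ) (piQ : Measure X)
    [IsProbabilityMeasure piQ]
    -- Assumption A1
    (hV : Measurable V) (hVe : ∀ x, Real.exp 1 ≤ V x)
    (hlam0 : 0 < lam) (hlam1 : lam < 1) (hb : 0 ≤ b)
    (hdrift : ∀ x, ∫ y, V y ∂(Q x) ≤ lam * V x + b)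
    -- Assumption A2
    (hm : 1 ≤ m) (heps0 : 0 < eps) (heps1 : eps < 1) (hd : 0 ≤ d)
    (hsmallcond : lam + 2 * b / (1 + d) < 1)
    (hsmall : ∃ ν : Measure X, IsProbabilityMeasure ν ∧
      ∀ x, V x ≤ d → ∀ A : Set X, MeasurableSet A →
        ENNReal.ofReal eps * ν A ≤ (kIter Q m) x A)
    -- piQ is the unique invariant probability measure, with piQ(V) < ∞
    (hinv : piQ.bind (fun x => Q x) = piQ)
    (huniq : ∀ π' : Measure X, IsProbabilityMeasure π' →
      π'.bind (fun x => Q x) = π' → π' = piQ)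
    (hpiV : Integrable V piQ)
    -- geometric ergodicity constants c ≥ 1, ρ ∈ (0,1)
    (hc : 1 ≤ c) (hρ0 : 0 < ρ) (hρ1 : ρ < 1)
    (herg : ∀ ξ : Measure X, IsProbabilityMeasure ξ → Integrable V ξ → ∀ k : ℕ,
      wTV V (ξ.bind (fun x => (kIter Q k) x)) piQ ≤
        c * ((∫ x, V x ∂ξ) + ∫ x, V x ∂piQ) * ρ ^ k)
    -- the function g and the exponent q
    (q : ℕ) (hq : 1 ≤ q)
    (g : X → ℝ) (hg : MemL (fun x => V x ^ ((1 : ℝ) / (2 * q))) g)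
    (n : ℕ) (hn : 1 ≤ n)
    -- the stationary canonical chain
    {Ω : Type*} [MeasurableSpace Ω] (P : Measure Ω) [IsProbabilityMeasure P]
    (Xs : ℕ → Ω → X) (hchain : IsMarkovChain P Xs piQ Q) :
    (∫ ω, |∑ ℓ ∈ Finset.range n, (g (Xs ℓ ω) - ∫ x, g x ∂piQ)| ^ (2 * q) ∂P) ≤
      gaussMoment q *
        (∫ ω, (∑ ℓ ∈ Finset.range n, (g (Xs ℓ ω) - ∫ x, g x ∂piQ)) ^ 2 ∂P) ^ q
      + (2 * c * ∫ x, V x ∂piQ) ^ (2 * q) *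
          vnorm (fun x => V x ^ ((1 : ℝ) / (2 * q)))
            (fun x => g x - ∫ y, g y ∂piQ) ^ (2 * q) *
          ∑ u ∈ Finset.Icc 1 (q - 1),
            Bcoef 0 u q * (n : ℝ) ^ u /
              (ρ ^ ((u : ℝ) / 2) * Real.log (1 / ρ) ^ (2 * q - u)) :=
  rosenthal_V_q_general (.of_wTV_bind_le hV hVe hinv hpiV hc hρ0 hρ1 herg) hq hg n hchain
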